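/- arXiv:2504.07921 — 2 statements merged into one kernel-verified Lean document; each statement's English description precedes it below -/
import Mathlib

section
/- Let G^C be an admissible cluster-DAG, let X^C, Y^C, Z^C be pairwise disjoint sets of clusters, and let V be a cluster. Let G^m be a micro graph compatible with G^C containing a Z^m-active path from X^m to Y^m. Then there exists a micro graph G^m' compatible with G^C containing a Z^m-active path π' from X^m to Y^m such that π' contains at most one collider among the variables of V, at most one fork among the variables of V, and at most one chain among the variables of V. -/
/-! Mixed graphs, d-separation, structures of interest, and cluster-DAGs. -/

/-- A mixed graph: directed edges and (symmetric) bidirected edges. -/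
structure MixedGraph (V : Type*) where
  dir : V → V → Prop
  bidir : V → V → Prop
  bidir_symm : ∀ a b, bidir a b → bidir b a

namespace MixedGraph

variable {V : Type*}

/-- Adjacency: joined by a directed edge (in either orientation) or a bidirected edge. -/
def adj (G : MixedGraph V) (a b : V) : Prop := G.dir a b ∨ G.dir b a ∨ G.bidir a b

/-- The edge between `a` and `b` has an arrowhead at `b`. -/
def intoHead (G : MixedGraph V) (a b : V) : Prop := G.dir a b ∨ G.bidir a b

/-- `b` is a descendant of `a` (reachable from `a` by a directed path, including `a`). -/
def Descendant (G : MixedGraph V) (a b : V) : Prop := Relation.ReflTransGen G.dir a b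

/-- The directed part of `G` is acyclic. -/
def Acyclic (G : MixedGraph V) : Prop := ∀ v, ¬ Relation.TransGen G.dir v v

/-- `b` is a collider on the (sub)path `a - b - c`. -/
def Collider (G : MixedGraph V) (a b c : V) : Prop := G.intoHead a b ∧ G.intoHead c b

/-- The middle vertex `b` of the triple `a - b - c` is active relative to `Z`. -/
def ActiveTriple (G : MixedGraph V) (Z : Set V) (a b c : V) : Prop :=
  (G.Collider a b c → b ∈ Z ∨ ∃ d ∈ Z, G.Descendant b d) ∧
  (¬ G.Collider a b c → b ∉ Z)

/-- A walk in a mixed graph: a nonempty list of vertices, consecutive ones adjacent. -/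
def IsWalk (G : MixedGraph V) (p : List V) : Prop := p ≠ [] ∧ p.Chain' G.adj

/-- A `Z`-active walk. -/
def ActiveWalk (G : MixedGraph V) (Z : Set V) (p : List V) : Prop :=
  G.IsWalk p ∧ ∀ (i : ℕ) (h : i + 2 < p.length),
    G.ActiveTriple Z (p[i]'(by omega)) (p[i+1]'(by omega)) (p[i+2]'h)

/-- A `Z`-active path (a `Z`-active walk with pairwise distinct vertices). -/
def ActivePath (G : MixedGraph V) (Z : Set V) (p : List V) : Prop :=
  G.ActiveWalk Z p ∧ p.Nodup

/-- `X` and `Y` are d-connected given `Z` in `G`. -/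
def DConnected (G : MixedGraph V) (X Y Z : Set V) : Prop :=
  ∃ p : List V, G.ActivePath Z p ∧
    (∃ x ∈ X, p.head? = some x) ∧ (∃ y ∈ Y, p.getLast? = some y)

/-- `σ` is a subgraph of `G`. -/
def Subgraph (σ G : MixedGraph V) : Prop :=
  (∀ a b, σ.dir a b → G.dir a b) ∧ (∀ a b, σ.bidir a b → G.bidir a b)

/-- Union of two mixed graphs. -/
def union (G₁ G₂ : MixedGraph V) : MixedGraph V where
  dir a b := G₁.dir a b ∨ G₂.dir a b
  bidir a b := G₁.bidir a b ∨ G₂.bidir a b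
  bidir_symm a b h := h.imp (G₁.bidir_symm a b) (G₂.bidir_symm a b)

/-- Add the directed edge `a → b`. -/
def addDir (G : MixedGraph V) (a b : V) : MixedGraph V where
  dir x y := G.dir x y ∨ (x = a ∧ y = b)
  bidir := G.bidir
  bidir_symm := G.bidir_symm

/-- Remove the directed edge `a → b`. -/
def removeDir (G : MixedGraph V) (a b : V) : MixedGraph V where
  dir x y := G.dir x y ∧ ¬ (x = a ∧ y = b)
  bidir := G.bidir
  bidir_symm := G.bidir_symm

/-- Add the bidirected edge `a ↔ b`. -/
def addBidir (G : MixedGraph V) (a b : V) : MixedGraph V where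
  dir := G.dir
  bidir x y := G.bidir x y ∨ (x = a ∧ y = b) ∨ (x = b ∧ y = a)
  bidir_symm x y h := by
    rcases h with h | ⟨hx, hy⟩ | ⟨hx, hy⟩
    · exact Or.inl (G.bidir_symm x y h)
    · exact Or.inr (Or.inr ⟨hy, hx⟩)
    · exact Or.inr (Or.inl ⟨hy, hx⟩)

/-- Remove the bidirected edge `a ↔ b`. -/
def removeBidir (G : MixedGraph V) (a b : V) : MixedGraph V where
  dir := G.dir
  bidir x y := G.bidir x y ∧ ¬ ((x = a ∧ y = b) ∨ (x = b ∧ y = a))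
  bidir_symm x y h := ⟨G.bidir_symm x y h.1, fun hc => h.2 (by tauto)⟩

/-- Remove all bidirected edges. -/
def removeAllBidir (G : MixedGraph V) : MixedGraph V :=
  ⟨G.dir, fun _ _ => False, fun _ _ h => h.elim⟩

/-- The mutilated graph `G_{\bar A, \underline B}`: remove every edge with an arrowhead
into a vertex of `A` and every directed edge out of a vertex of `B`. -/
def mutilate (G : MixedGraph V) (A B : Set V) : MixedGraph V where
  dir a b := G.dir a b ∧ b ∉ A ∧ a ∉ B
  bidir a b := G.bidir a b ∧ a ∉ A ∧ b ∉ A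
  bidir_symm a b h := ⟨G.bidir_symm a b h.1, h.2.2, h.2.1⟩

end MixedGraph

variable {V : Type*}

/-- The roots of `σ` with vertex set `S`: vertices with no outgoing directed edge. -/
def Roots (S : Set V) (σ : MixedGraph V) : Set V := {v | v ∈ S ∧ ∀ w, ¬ σ.dir v w}

/-- Node condition for structures of interest: at most one outgoing directed edge,
or two outgoing directed edges but no edge with an arrowhead into it. -/
def OutCondition (σ : MixedGraph V) (v : V) : Prop :=
  (∀ w₁ w₂, σ.dir v w₁ → σ.dir v w₂ → w₁ = w₂) ∨
  ((∃ w₁ w₂, w₁ ≠ w₂ ∧ σ.dir v w₁ ∧ σ.dir v w₂ ∧ ∀ w, σ.dir v w → w = w₁ ∨ w = w₂) ∧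
    (∀ u, ¬ σ.dir u v) ∧ (∀ u, ¬ σ.bidir u v))

/-- `σ`, with vertex set `S`, is a structure of interest: an ADMG with a single
connected component whose nodes satisfy the out-degree condition. -/
def IsSOI (S : Set V) (σ : MixedGraph V) : Prop :=
  (∀ a b, σ.dir a b → a ∈ S ∧ b ∈ S) ∧
  (∀ a b, σ.bidir a b → a ∈ S ∧ b ∈ S) ∧
  S.Nonempty ∧
  (∀ a ∈ S, ∀ b ∈ S, Relation.ReflTransGen σ.adj a b) ∧
  σ.Acyclic ∧
  (∀ v ∈ S, OutCondition σ v)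

/-- The structure of interest `σ` (with vertex set `S`) connects `X` and `Y` under `Z`
inside the mixed graph `G`. -/
def SOIConnects (S : Set V) (σ G : MixedGraph V) (X Y Z : Set V) : Prop :=
  MixedGraph.Subgraph σ G ∧
  (S ∩ X).Nonempty ∧ (S ∩ Y).Nonempty ∧
  Roots S σ ⊆ X ∪ Y ∪ Z ∧
  (∀ v ∈ S, v ∉ Roots S σ → v ∉ Z)

/-- `b` is a fork on the (sub)path `a - b - c`. -/
def ForkAt (G : MixedGraph V) (a b c : V) : Prop := G.dir b a ∧ G.dir b c

/-- `b` is a chain on the (sub)path `a - b - c`. -/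
def ChainAt (G : MixedGraph V) (a b c : V) : Prop :=
  (G.dir a b ∧ G.dir b c) ∨ (G.dir c b ∧ G.dir b a)

/-- The path `p` contains at most one interior triple satisfying `P` whose middle
vertex lies in `T`. -/
def AtMostOneTriple (P : V → V → V → Prop) (T : Set V) (p : List V) : Prop :=
  ∀ (i j : ℕ) (hi : i + 2 < p.length) (hj : j + 2 < p.length),
    P (p[i]'(by omega)) (p[i+1]'(by omega)) (p[i+2]'hi) →
    P (p[j]'(by omega)) (p[j+1]'(by omega)) (p[j+2]'hj) →
    (p[i+1]'(by omega)) ∈ T → (p[j+1]'(by omega)) ∈ T → i = j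

/-- `σ` is exactly the subgraph consisting of the vertices of the path `p` and
one edge joining each pair of consecutive vertices of `p`. -/
def IsPathGraph (σ : MixedGraph V) (p : List V) : Prop :=
  p ≠ [] ∧ p.Nodup ∧
  (∀ (i : ℕ) (h : i + 1 < p.length),
    (σ.dir (p[i]'(by omega)) (p[i+1]'h) ∧ ¬ σ.dir (p[i+1]'h) (p[i]'(by omega)) ∧
      ¬ σ.bidir (p[i]'(by omega)) (p[i+1]'h)) ∨
    (σ.dir (p[i+1]'h) (p[i]'(by omega)) ∧ ¬ σ.dir (p[i]'(by omega)) (p[i+1]'h) ∧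
      ¬ σ.bidir (p[i]'(by omega)) (p[i+1]'h)) ∨
    (σ.bidir (p[i]'(by omega)) (p[i+1]'h) ∧ ¬ σ.dir (p[i]'(by omega)) (p[i+1]'h) ∧
      ¬ σ.dir (p[i+1]'h) (p[i]'(by omega)))) ∧
  (∀ a b, σ.dir a b → ∃ (i : ℕ) (h : i + 1 < p.length),
    ((p[i]'(by omega)) = a ∧ (p[i+1]'h) = b) ∨ ((p[i]'(by omega)) = b ∧ (p[i+1]'h) = a)) ∧
  (∀ a b, σ.bidir a b → ∃ (i : ℕ) (h : i + 1 < p.length),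
    ((p[i]'(by omega)) = a ∧ (p[i+1]'h) = b) ∨ ((p[i]'(by omega)) = b ∧ (p[i+1]'h) = a))

/-- A cluster-DAG: a mixed graph on clusters (self-loops and cycles allowed),
each cluster carrying a positive size. -/
structure ClusterDAG (C : Type*) where
  graph : MixedGraph C
  size : C → ℕ
  size_pos : ∀ c, 0 < size c

namespace ClusterDAG

variable {C : Type*}

/-- The micro vertex set: for each cluster `c`, variables `c_1, …, c_{#c}`. -/
abbrev MicroV (GC : ClusterDAG C) : Type _ := Σ c : C, Fin (GC.size c)

/-- The micro graph `Gm` is compatible with the cluster-DAG `GC`. -/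
def Compatible (GC : ClusterDAG C) (Gm : MixedGraph GC.MicroV) : Prop :=
  Gm.Acyclic ∧
  (∀ A B : C, A ≠ B →
    (GC.graph.dir A B ↔ ∃ (i : Fin (GC.size A)) (j : Fin (GC.size B)), Gm.dir ⟨A, i⟩ ⟨B, j⟩)) ∧
  (∀ A B : C, A ≠ B →
    (GC.graph.bidir A B ↔ ∃ (i : Fin (GC.size A)) (j : Fin (GC.size B)), Gm.bidir ⟨A, i⟩ ⟨B, j⟩)) ∧
  (∀ A : C, (GC.graph.dir A A ↔ ∃ i j : Fin (GC.size A), i ≠ j ∧ Gm.dir ⟨A, i⟩ ⟨A, j⟩)) ∧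
  (∀ A : C, (GC.graph.bidir A A ↔ ∃ i j : Fin (GC.size A), i ≠ j ∧ Gm.bidir ⟨A, i⟩ ⟨A, j⟩))

/-- `GC` is admissible: some compatible micro graph exists. -/
def Admissible (GC : ClusterDAG C) : Prop := ∃ Gm, GC.Compatible Gm

/-- The set of micro variables belonging to clusters of `S`. -/
def microSet (GC : ClusterDAG C) (S : Set C) : Set GC.MicroV := {v | v.1 ∈ S}

/-- The indexing inside each cluster is consistent with a topological order of `Gm`:
`V_i` is never a strict descendant of `V_j` when `i < j`. -/
def TopoConsistent (GC : ClusterDAG C) (Gm : MixedGraph GC.MicroV) : Prop :=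
  ∀ (A : C) (i j : Fin (GC.size A)), i < j →
    ¬ Relation.TransGen Gm.dir ⟨A, j⟩ ⟨A, i⟩

/-- Remove all bidirected edges of the cluster-DAG. -/
def removeAllBidir (GC : ClusterDAG C) : ClusterDAG C :=
  ⟨GC.graph.removeAllBidir, GC.size, GC.size_pos⟩

/-- Add the bidirected edge `A ↔ B` to the cluster-DAG. -/
def addBidir (GC : ClusterDAG C) (A B : C) : ClusterDAG C :=
  ⟨GC.graph.addBidir A B, GC.size, GC.size_pos⟩

/-- Remove all directed self-loops of the cluster-DAG. -/
def removeDirSelfLoops (GC : ClusterDAG C) : ClusterDAG C :=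
  ⟨⟨fun A B => GC.graph.dir A B ∧ A ≠ B, GC.graph.bidir, GC.graph.bidir_symm⟩,
    GC.size, GC.size_pos⟩

/-- Add a directed self-loop on the cluster `Vc`. -/
def addDirSelfLoop (GC : ClusterDAG C) (Vc : C) : ClusterDAG C :=
  ⟨⟨fun A B => GC.graph.dir A B ∨ (A = Vc ∧ B = Vc), GC.graph.bidir, GC.graph.bidir_symm⟩,
    GC.size, GC.size_pos⟩

/-- Remove all intra-cluster directed edges of a micro graph. -/
def removeIntraDir (GC : ClusterDAG C) (Gm : MixedGraph GC.MicroV) : MixedGraph GC.MicroV where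
  dir a b := Gm.dir a b ∧ a.1 ≠ b.1
  bidir := Gm.bidir
  bidir_symm := Gm.bidir_symm

/-- Reduce every cluster of size greater than 4 to size 4. -/
def truncate4 (GC : ClusterDAG C) : ClusterDAG C where
  graph := GC.graph
  size c := min (GC.size c) 4
  size_pos c := lt_min (GC.size_pos c) (by norm_num)

/-- The minimal compatible graph `G^m_min` of a cluster-DAG. -/
def minGraph (GC : ClusterDAG C) : MixedGraph GC.MicroV where
  dir a b :=
    (a.1 = b.1 ∧ GC.graph.dir a.1 b.1 ∧ (a.2 : ℕ) < (b.2 : ℕ)) ∨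
    (a.1 ≠ b.1 ∧ GC.graph.dir a.1 b.1 ∧ (a.2 : ℕ) = 0 ∧ (b.2 : ℕ) = GC.size b.1 - 1)
  bidir a b := GC.graph.bidir a.1 b.1 ∧ a ≠ b
  bidir_symm a b h := ⟨GC.graph.bidir_symm _ _ h.1, Ne.symm h.2⟩

/-- The unfolded graph `G^{m,C}_u` of a cluster-DAG. -/
def unfolded (GC : ClusterDAG C) : MixedGraph GC.MicroV where
  dir a b := (minGraph GC).dir a b ∨
    (a.1 ≠ b.1 ∧ GC.graph.dir a.1 b.1 ∧ MixedGraph.Acyclic ((minGraph GC).addDir a b))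
  bidir := (minGraph GC).bidir
  bidir_symm := (minGraph GC).bidir_symm

/-- Relabel a micro graph by a permutation of the indices within each cluster. -/
def relabel (GC : ClusterDAG C) (Gm : MixedGraph GC.MicroV)
    (e : ∀ c, Fin (GC.size c) ≃ Fin (GC.size c)) : MixedGraph GC.MicroV where
  dir a b := Gm.dir ⟨a.1, (e a.1).symm a.2⟩ ⟨b.1, (e b.1).symm b.2⟩
  bidir a b := Gm.bidir ⟨a.1, (e a.1).symm a.2⟩ ⟨b.1, (e b.1).symm b.2⟩
  bidir_symm a b h := Gm.bidir_symm _ _ h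

end ClusterDAG


namespace RCP

open MixedGraph

variable {W : Type*}

def An (G : MixedGraph W) (Z : Set W) (x : W) : Prop := ∃ d ∈ Z, G.Descendant x d

lemma An.step {G : MixedGraph W} {Z : Set W} {x y : W} (h : G.dir x y) (hy : An G Z y) :
    An G Z x := by
  obtain ⟨d, hd, hr⟩ := hy
  exact ⟨d, hd, Relation.ReflTransGen.head h hr⟩

lemma An.rtg {G : MixedGraph W} {Z : Set W} {x y : W} (h : Relation.ReflTransGen G.dir x y)
    (hy : An G Z y) : An G Z x := by
  obtain ⟨d, hd, hr⟩ := hy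
  exact ⟨d, hd, Relation.ReflTransGen.trans h hr⟩

lemma activeTriple_iff {G : MixedGraph W} {Z : Set W} {a b c : W} :
    G.ActiveTriple Z a b c ↔
      (G.Collider a b c → An G Z b) ∧ (¬ G.Collider a b c → b ∉ Z) := by
  unfold MixedGraph.ActiveTriple
  refine and_congr_left fun _ => imp_congr_right fun _ => ?_
  constructor
  · rintro (h | h)
    · exact ⟨b, h, Relation.ReflTransGen.refl⟩
    · exact h
  · exact Or.inr

lemma adj_symm {G : MixedGraph W} {a b : W} (h : G.adj a b) : G.adj b a := by
  rcases h with h | h | h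
  · exact Or.inr (Or.inl h)
  · exact Or.inl h
  · exact Or.inr (Or.inr (G.bidir_symm _ _ h))

lemma adj_of_into {G : MixedGraph W} {a b : W} (h : G.intoHead a b) : G.adj a b := by
  rcases h with h | h
  · exact Or.inl h
  · exact Or.inr (Or.inr h)

lemma triple_symm {G : MixedGraph W} {Z : Set W} {a b c : W} (h : G.ActiveTriple Z a b c) :
    G.ActiveTriple Z c b a := by
  have : G.Collider c b a ↔ G.Collider a b c := by
    unfold MixedGraph.Collider; exact and_comm
  rw [activeTriple_iff] at *
  rw [this]; exact h

/-- Recursive form of an active walk. -/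
def Act (G : MixedGraph W) (Z : Set W) : List W → Prop
  | [] => True
  | [_] => True
  | [a, b] => G.adj a b
  | a :: b :: c :: l => G.adj a b ∧ G.ActiveTriple Z a b c ∧ Act G Z (b :: c :: l)

lemma Act.tail {G : MixedGraph W} {Z : Set W} {a : W} {l : List W} (h : Act G Z (a :: l)) :
    Act G Z l := by
  match l, h with
  | [], _ => trivial
  | [_], _ => trivial
  | _ :: _ :: _, h => exact h.2.2

lemma act_cons {G : MixedGraph W} {Z : Set W} {a b : W} {l : List W} :
    Act G Z (a :: b :: l) ↔
      G.adj a b ∧ (∀ c, l.head? = some c → G.ActiveTriple Z a b c) ∧ Act G Z (b :: l) := by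
  cases l with
  | nil => simp [Act]
  | cons c l => simp [Act]

lemma act_glue {G : MixedGraph W} {Z : Set W} (L : List W) (a b : W) (R : List W) :
    Act G Z (L ++ a :: b :: R) ↔ Act G Z (L ++ [a, b]) ∧ Act G Z (a :: b :: R) := by
  induction L with
  | nil =>
    simp only [List.nil_append]
    constructor
    · intro h; exact ⟨(act_cons.1 h).1, h⟩
    · exact fun h => h.2
  | cons x L ih =>
    cases L with
    | nil =>
      simp only [List.cons_append, List.nil_append] at ih ⊢
      rw [act_cons (l := b :: R), act_cons (l := [b])]
      simp only [List.head?_cons]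
      tauto
    | cons y L =>
      simp only [List.cons_append] at ih ⊢
      rw [act_cons, act_cons, ih]
      have : (L ++ a :: b :: R).head? = (L ++ [a, b]).head? := by cases L <;> simp
      rw [this]; tauto

lemma Act.right {G : MixedGraph W} {Z : Set W} {A B : List W} (h : Act G Z (A ++ B)) :
    Act G Z B := by
  induction A with
  | nil => exact h
  | cons x A ih => exact ih h.tail

lemma Act.left {G : MixedGraph W} {Z : Set W} {A B : List W} (h : Act G Z (A ++ B)) :
    Act G Z A := by
  induction A with
  | nil => trivial
  | cons x A ih =>
    have := ih h.tail
    cases A with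
    | nil => trivial
    | cons y A =>
      simp only [List.cons_append] at h this
      rw [act_cons] at h ⊢
      refine ⟨h.1, fun c hc => h.2.1 c ?_, this⟩
      cases A with
      | nil => simp at hc
      | cons => simpa using hc

lemma Act.reverse {G : MixedGraph W} {Z : Set W} {l : List W} (h : Act G Z l) :
    Act G Z l.reverse := by
  induction l with
  | nil => trivial
  | cons a l ih =>
    have h2 := ih h.tail
    match l, h, h2 with
    | [], _, _ => trivial
    | [b], h, _ => exact adj_symm h
    | b :: c :: l, h, h2 =>
      simp only [List.reverse_cons, List.append_assoc, List.cons_append, List.nil_append] at h2 ⊢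
      rw [act_glue]
      refine ⟨h2, ?_⟩
      exact ⟨adj_symm (act_cons.1 h.tail).1, triple_symm h.2.1, adj_symm h.1⟩

lemma act_of_activeWalk {G : MixedGraph W} {Z : Set W} {p : List W} (h : G.ActiveWalk Z p) :
    Act G Z p := by
  obtain ⟨⟨hnil, hc⟩, ht⟩ := h
  clear hnil
  induction p with
  | nil => trivial
  | cons a l ih =>
    match l, hc, ht, ih with
    | [], _, _, _ => trivial
    | [b], hc, _, _ => exact (List.isChain_cons_cons.1 hc).1
    | b :: c :: l, hc, ht, ih =>
      have hc' := List.isChain_cons_cons.1 hc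
      refine ⟨hc'.1, ht 0 (by simp), ih ?_ hc'.2⟩
      intro i hi
      have := ht (i+1) (by simp only [List.length_cons] at hi ⊢; omega)
      simpa using this

lemma activeWalk_of_act {G : MixedGraph W} {Z : Set W} {p : List W} (hp : p ≠ [])
    (h : Act G Z p) : G.ActiveWalk Z p := by
  induction p with
  | nil => exact absurd rfl hp
  | cons a l ih =>
    match l, h, ih with
    | [], _, _ => exact ⟨⟨hp, List.isChain_singleton _⟩, by intro i hi; simp at hi⟩
    | [b], h, _ =>
      refine ⟨⟨hp, ?_⟩, by intro i hi; simp at hi⟩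
      exact List.isChain_cons_cons.2 ⟨h, by simp⟩
    | b :: c :: l, h, ih =>
      obtain ⟨⟨_, i1⟩, i2⟩ := ih (by simp) h.2.2
      refine ⟨⟨hp, List.isChain_cons_cons.2 ⟨h.1, i1⟩⟩, ?_⟩
      intro i hi
      cases i with
      | zero => exact h.2.1
      | succ i =>
        have := i2 i (by simp only [List.length_cons] at hi ⊢; omega)
        simpa using this

/-- Two graphs agree on the edges between `x` and `y`. -/
def Agree (G G' : MixedGraph W) (x y : W) : Prop :=
  (G'.dir x y ↔ G.dir x y) ∧ (G'.bidir x y ↔ G.bidir x y)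

lemma Agree.into {G G' : MixedGraph W} {x y : W} (h : Agree G G' x y) :
    G'.intoHead x y ↔ G.intoHead x y := by
  unfold MixedGraph.intoHead; rw [h.1, h.2]

lemma triple_congr {G G' : MixedGraph W} {Z : Set W} {a b c a' c' : W}
    (hAn : ∀ x, An G Z x → An G' Z x)
    (h1 : G'.intoHead a' b ↔ G.intoHead a b) (h2 : G'.intoHead c' b ↔ G.intoHead c b)
    (h : G.ActiveTriple Z a b c) : G'.ActiveTriple Z a' b c' := by
  have : G'.Collider a' b c' ↔ G.Collider a b c := by
    unfold MixedGraph.Collider; rw [h1, h2]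
  rw [activeTriple_iff] at *
  rw [this]; exact ⟨fun hc => hAn _ (h.1 hc), h.2⟩

lemma Act.transport {G G' : MixedGraph W} {Z : Set W}
    (hAn : ∀ x, An G Z x → An G' Z x) {q : List W}
    (h : ∀ x ∈ q, ∀ y ∈ q, Agree G G' x y) (hq : Act G Z q) : Act G' Z q := by
  induction q with
  | nil => trivial
  | cons a l ih =>
    have ih' := ih (fun x hx y hy => h x (List.mem_cons_of_mem _ hx) y (List.mem_cons_of_mem _ hy))
      hq.tail
    cases l with
    | nil => trivial
    | cons b l =>
      rw [act_cons] at hq ⊢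
      have hadj : G'.adj a b := by
        have h1 := h a (by simp) b (by simp)
        have h2 := h b (by simp) a (by simp)
        unfold MixedGraph.adj
        rw [h1.1, h2.1, h1.2]; exact hq.1
      refine ⟨hadj, fun c hc => ?_, ih'⟩
      have hcl : c ∈ l := List.mem_of_mem_head? (by simp [hc])
      exact triple_congr hAn (h a (by simp) b (by simp)).into
        (h c (by simp [hcl]) b (by simp)).into (hq.2.1 c hc)

lemma act_replace_head {G G' : MixedGraph W} {Z : Set W} {w u d : W} {R : List W}
    (hAn : ∀ x, An G Z x → An G' Z x)
    (h : Act G Z (w :: d :: R)) (h1 : Act G' Z (d :: R)) (hadj : G'.adj u d)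
    (hag : ∀ x ∈ R, Agree G G' x d) (hi : G'.intoHead u d ↔ G.intoHead w d) :
    Act G' Z (u :: d :: R) := by
  rw [act_cons] at h ⊢
  refine ⟨hadj, fun c hc => ?_, h1⟩
  have hcl : c ∈ R := List.mem_of_mem_head? (by simp [hc])
  exact triple_congr hAn hi (hag c hcl).into (h.2.1 c hc)

lemma act_replace_last {G G' : MixedGraph W} {Z : Set W} {a u w : W} {L : List W}
    (hAn : ∀ x, An G Z x → An G' Z x)
    (h : Act G Z (L ++ [a, u])) (h1 : Act G' Z (L ++ [a])) (hadj : G'.adj a w)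
    (hag : ∀ x ∈ L, Agree G G' x a) (hi : G'.intoHead w a ↔ G.intoHead u a) :
    Act G' Z (L ++ [a, w]) := by
  have h' := h.reverse
  have h1' := h1.reverse
  simp only [List.reverse_append, List.reverse_cons, List.reverse_nil, List.nil_append,
    List.cons_append] at h' h1'
  have := (act_replace_head (u := w) hAn h' h1' (adj_symm hadj)
    (fun x hx => hag x (by simpa using hx)) hi).reverse
  simpa using this

/-- Following the directed edges along an active walk. -/
lemma follow {G : MixedGraph W} {Z : Set W} (l : List W) (x y : W) (hxy : G.dir x y)
    (h : Act G Z (x :: y :: l)) : An G Z x ∨ (x :: y :: l).IsChain G.dir := by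
  induction l generalizing x y with
  | nil => right; simpa using hxy
  | cons z l ih =>
    by_cases hc : G.Collider x y z
    · exact Or.inl (An.step hxy ((activeTriple_iff.1 h.2.1).1 hc))
    · have hyz : G.dir y z := by
        have hadj := (act_cons.1 h.tail).1
        have hn : ¬ G.intoHead z y := fun h' => hc ⟨Or.inl hxy, h'⟩
        rcases hadj with h' | h' | h'
        · exact h'
        · exact absurd (Or.inl h') hn
        · exact absurd (Or.inr (G.bidir_symm _ _ h')) hn
      rcases ih y z hyz h.tail with h' | h'
      · exact Or.inl (An.step hxy h')
      · exact Or.inr (List.isChain_cons_cons.2 ⟨hxy, h'⟩)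

lemma chain_rtg {r : W → W → Prop} {u w : W} {Q : List W} (h : Q.IsChain r)
    (hu : Q.head? = some u) (hw : Q.getLast? = some w) : Relation.ReflTransGen r u w := by
  induction Q generalizing u with
  | nil => simp at hu
  | cons x Q ih =>
    simp only [List.head?_cons, Option.some.injEq] at hu
    subst hu
    cases Q with
    | nil => simp at hw; subst hw; exact Relation.ReflTransGen.refl
    | cons y Q =>
      rw [List.isChain_cons_cons] at h
      exact Relation.ReflTransGen.head h.1 (ih h.2 (by simp) (by simpa using hw))

lemma add_edge_rtg {r r' : W → W → Prop} {e f : W}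
    (hr : ∀ x y, r' x y → r x y ∨ (x = e ∧ y = f)) {x y : W} (h : Relation.TransGen r' x y) :
    Relation.TransGen r x y ∨ (Relation.ReflTransGen r x e ∧ Relation.ReflTransGen r f y) := by
  induction h with
  | single h =>
    rcases hr _ _ h with h | ⟨rfl, rfl⟩
    · exact Or.inl (.single h)
    · exact Or.inr ⟨.refl, .refl⟩
  | tail _ h ih =>
    rcases hr _ _ h with h | ⟨rfl, rfl⟩
    · rcases ih with ih | ih
      · exact Or.inl (ih.tail h)
      · exact Or.inr ⟨ih.1, ih.2.tail h⟩
    · rcases ih with ih | ih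
      · exact Or.inr ⟨ih.to_reflTransGen, .refl⟩
      · exact Or.inr ⟨ih.1, .refl⟩

def isp (x y p q : W) : Prop := (x = p ∧ y = q) ∨ (x = q ∧ y = p)

/-- Copy the bidirected edge of the pair `s, n` to `t, n` (moving the bidirected edge of
`t, n` to `s, n`) and, if `φ` holds, add the directed edge `e → f`. -/
def cp (G : MixedGraph W) (s t n e f : W) (φ : Prop) : MixedGraph W where
  dir x y := G.dir x y ∨ (φ ∧ x = e ∧ y = f)
  bidir x y := (G.bidir x y ∧ ¬ isp x y t n) ∨ (isp x y t n ∧ G.bidir s n) ∨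
    (isp x y s n ∧ G.bidir t n)
  bidir_symm x y h := by
    have hs : ∀ p q : W, isp x y p q ↔ isp y x p q := by
      intro p q; unfold isp; tauto
    rw [hs, hs] at h
    rcases h with h | h | h
    · exact Or.inl ⟨G.bidir_symm _ _ h.1, h.2⟩
    · exact Or.inr (Or.inl h)
    · exact Or.inr (Or.inr h)

lemma cp_acyclic {G : MixedGraph W} {s t n e f : W} {φ : Prop} (h : G.Acyclic)
    (hf : φ → ¬ Relation.ReflTransGen G.dir f e) : (cp G s t n e f φ).Acyclic := by
  intro v hv
  by_cases hφ : φ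
  · rcases add_edge_rtg (r := G.dir) (e := e) (f := f) (fun x y h => by
      rcases h with h | h
      · exact Or.inl h
      · exact Or.inr h.2) hv with h' | h'
    · exact h v h'
    · exact hf hφ (h'.2.trans h'.1)
  · exact h v (Relation.TransGen.mono (fun x y h => by
      rcases h with h | h
      · exact h
      · exact absurd h.1 hφ) _ _ hv)

lemma cp_an {G : MixedGraph W} {s t n e f : W} {φ : Prop} {Z : Set W} (x : W)
    (h : An G Z x) : An (cp G s t n e f φ) Z x := by
  obtain ⟨d, hd, hr⟩ := h
  exact ⟨d, hd, Relation.ReflTransGen.mono (fun _ _ h => Or.inl h) _ _ hr⟩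

lemma cp_agree {G : MixedGraph W} {s t n e f : W} {φ : Prop}
    (hef : isp e f t n) {x y : W}
    (h : (x ≠ n ∧ y ≠ n) ∨ (x ≠ s ∧ x ≠ t ∧ y ≠ s ∧ y ≠ t)) :
    Agree G (cp G s t n e f φ) x y := by
  have h1 : ¬ isp x y t n := by unfold isp; tauto
  have h2 : ¬ isp x y s n := by unfold isp; tauto
  have h3 : ¬ (x = e ∧ y = f) := by
    rintro ⟨rfl, rfl⟩; exact h1 hef
  constructor
  · simp only [cp]; tauto
  · simp only [cp]; tauto

lemma cp_bidir_tn {G : MixedGraph W} {s t n e f : W} {φ : Prop} (hst : s ≠ t) (htn : t ≠ n) :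
    (cp G s t n e f φ).bidir t n ↔ G.bidir s n := by
  have h1 : isp t n t n := Or.inl ⟨rfl, rfl⟩
  have h2 : ¬ isp t n s n := by
    rintro (⟨h, _⟩ | ⟨h, _⟩)
    · exact hst h.symm
    · exact htn h
  simp only [cp]; tauto

lemma bidir_comm {G : MixedGraph W} {a b : W} : G.bidir a b ↔ G.bidir b a :=
  ⟨G.bidir_symm _ _, G.bidir_symm _ _⟩

/-- Edge sets agree on the level of clusters. -/
def Emb {C : Type*} {GC : ClusterDAG C} (r r' : GC.MicroV → GC.MicroV → Prop) : Prop :=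
  ∀ x y, r x y → ∃ x' y', x'.1 = x.1 ∧ y'.1 = y.1 ∧ (x ≠ y → x' ≠ y') ∧ r' x' y'

lemma Emb.iff1 {C : Type*} {GC : ClusterDAG C} {r r' : GC.MicroV → GC.MicroV → Prop}
    (h : Emb r r') (A B : C)
    (hr : ∃ (i : Fin (GC.size A)) (j : Fin (GC.size B)), r ⟨A, i⟩ ⟨B, j⟩) :
    ∃ (i : Fin (GC.size A)) (j : Fin (GC.size B)), r' ⟨A, i⟩ ⟨B, j⟩ := by
  obtain ⟨i, j, hr⟩ := hr
  obtain ⟨⟨A', i'⟩, ⟨B', j'⟩, h1, h2, _, h4⟩ := h _ _ hr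
  simp only at h1 h2
  subst h1 h2
  exact ⟨i', j', h4⟩

lemma Emb.iff2 {C : Type*} {GC : ClusterDAG C} {r r' : GC.MicroV → GC.MicroV → Prop}
    (h : Emb r r') (A : C)
    (hr : ∃ (i j : Fin (GC.size A)), i ≠ j ∧ r ⟨A, i⟩ ⟨A, j⟩) :
    ∃ (i j : Fin (GC.size A)), i ≠ j ∧ r' ⟨A, i⟩ ⟨A, j⟩ := by
  obtain ⟨i, j, hij, hr⟩ := hr
  obtain ⟨⟨A', i'⟩, ⟨B', j'⟩, h1, h2, h3, h4⟩ := h _ _ hr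
  simp only at h1 h2
  subst h1
  subst h2
  refine ⟨i', j', ?_, h4⟩
  rintro rfl
  exact h3 (by simpa using hij) rfl

lemma compat_transfer {C : Type*} {GC : ClusterDAG C} {G G' : MixedGraph GC.MicroV}
    (h : GC.Compatible G) (hac : G'.Acyclic)
    (h1 : Emb G.dir G'.dir) (h2 : Emb G'.dir G.dir)
    (h3 : Emb G.bidir G'.bidir) (h4 : Emb G'.bidir G.bidir) : GC.Compatible G' := by
  obtain ⟨_, c1, c2, c3, c4⟩ := h
  refine ⟨hac, fun A B hAB => ?_, fun A B hAB => ?_, fun A => ?_, fun A => ?_⟩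
  · rw [c1 A B hAB]; exact ⟨h1.iff1 A B, h2.iff1 A B⟩
  · rw [c2 A B hAB]; exact ⟨h3.iff1 A B, h4.iff1 A B⟩
  · rw [c3 A]; exact ⟨h1.iff2 A, h2.iff2 A⟩
  · rw [c4 A]; exact ⟨h3.iff2 A, h4.iff2 A⟩

lemma cp_compat {C : Type*} {GC : ClusterDAG C} {G : MixedGraph GC.MicroV}
    (h : GC.Compatible G) {s t n e f : GC.MicroV} {φ : Prop}
    (hst : s.1 = t.1) (hne : s ≠ t) (hsn : s ≠ n) (htn : t ≠ n)
    (hφ : φ → (e = n ∧ f = t ∧ G.dir n s) ∨ (e = t ∧ f = n ∧ G.dir s n))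
    (hf : φ → ¬ Relation.ReflTransGen G.dir f e) :
    GC.Compatible (cp G s t n e f φ) := by
  refine compat_transfer h (cp_acyclic h.1 hf) ?_ ?_ ?_ ?_
  · exact fun x y hxy => ⟨x, y, rfl, rfl, id, Or.inl hxy⟩
  · rintro x y (hxy | ⟨hp, rfl, rfl⟩)
    · exact ⟨x, y, rfl, rfl, id, hxy⟩
    · rcases hφ hp with ⟨rfl, rfl, hd⟩ | ⟨rfl, rfl, hd⟩
      · exact ⟨x, s, rfl, hst, fun _ => hsn.symm, hd⟩
      · exact ⟨s, y, hst, rfl, fun _ => hsn, hd⟩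
  · intro x y hxy
    by_cases hi : isp x y t n
    · rcases hi with ⟨rfl, rfl⟩ | ⟨rfl, rfl⟩
      · exact ⟨s, y, hst, rfl, fun _ => hsn, Or.inr (Or.inr ⟨Or.inl ⟨rfl, rfl⟩, hxy⟩)⟩
      · exact ⟨x, s, rfl, hst, fun _ => hsn.symm,
          Or.inr (Or.inr ⟨Or.inr ⟨rfl, rfl⟩, G.bidir_symm _ _ hxy⟩)⟩
    · exact ⟨x, y, rfl, rfl, id, Or.inl ⟨hxy, hi⟩⟩
  · rintro x y (hxy | ⟨hi, hb⟩ | ⟨hi, hb⟩)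
    · exact ⟨x, y, rfl, rfl, id, hxy.1⟩
    · rcases hi with ⟨rfl, rfl⟩ | ⟨rfl, rfl⟩
      · exact ⟨s, y, hst, rfl, fun _ => hsn, hb⟩
      · exact ⟨x, s, rfl, hst, fun _ => hsn.symm, G.bidir_symm _ _ hb⟩
    · rcases hi with ⟨rfl, rfl⟩ | ⟨rfl, rfl⟩
      · exact ⟨t, y, hst.symm, rfl, fun _ => htn, hb⟩
      · exact ⟨x, t, rfl, hst.symm, fun _ => htn.symm, G.bidir_symm _ _ hb⟩

section main

variable {C : Type*} (GC : ClusterDAG C) (Z : Set GC.MicroV)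

/-- There is a shorter path in some compatible graph. -/
def Shorter (X Y : Set GC.MicroV) (k : ℕ) : Prop :=
  ∃ G' : MixedGraph GC.MicroV, GC.Compatible G' ∧ ∃ p' : List GC.MicroV,
    Act G' Z p' ∧ p'.Nodup ∧ (∃ x ∈ X, p'.head? = some x) ∧ (∃ y ∈ Y, p'.getLast? = some y) ∧
    p'.length < k

lemma Shorter.symm {X Y : Set GC.MicroV} {k : ℕ} (h : Shorter GC Z X Y k) :
    Shorter GC Z Y X k := by
  obtain ⟨G', hc, p', h1, h2, h3, h4, h5⟩ := h
  refine ⟨G', hc, p'.reverse, h1.reverse, by simpa using h2, ?_, ?_, by simpa using h5⟩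
  · simpa using h4
  · simpa using h3

structure Conf (G : MixedGraph GC.MicroV) (X Y : Set GC.MicroV) (L : List GC.MicroV)
    (a u : GC.MicroV) (Q : List GC.MicroV) (w d : GC.MicroV) (R : List GC.MicroV) : Prop where
  compat : GC.Compatible G
  act : Act G Z (L ++ a :: (Q ++ d :: R))
  nodup : (L ++ a :: (Q ++ d :: R)).Nodup
  hx : ∃ x ∈ X, (L ++ [a]).head? = some x
  hy : ∃ y ∈ Y, (d :: R).getLast? = some y
  hQu : Q.head? = some u
  hQw : Q.getLast? = some w
  huw : u.1 = w.1
  hne : u ≠ w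

variable {GC Z} {G : MixedGraph GC.MicroV} {X Y : Set GC.MicroV} {L : List GC.MicroV}
    {a u : GC.MicroV} {Q : List GC.MicroV} {w d : GC.MicroV} {R : List GC.MicroV}

lemma Conf.symm (h : Conf GC Z G X Y L a u Q w d R) :
    Conf GC Z G Y X R.reverse d w Q.reverse u a L.reverse where
  compat := h.compat
  act := by have := h.act.reverse; simpa using this
  nodup := by
    have := List.nodup_reverse.2 h.nodup
    simpa using this
  hx := by have := h.hy; rw [← List.head?_reverse] at this; simpa using this
  hy := by have := h.hx; rw [← List.getLast?_reverse] at this; simpa using this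
  hQu := by simpa using h.hQw
  hQw := by simpa using h.hQu
  huw := h.huw.symm
  hne := h.hne.symm

lemma Conf.len (L : List GC.MicroV) (a : GC.MicroV) (Q : List GC.MicroV) (d : GC.MicroV)
    (R : List GC.MicroV) :
    (R.reverse ++ d :: (Q.reverse ++ a :: L.reverse)).length =
      (L ++ a :: (Q ++ d :: R)).length := by
  simp; omega

lemma Conf.actQ (h : Conf GC Z G X Y L a u Q w d R) : Act G Z Q := by
  have := h.act.right.tail.left
  exact this

lemma Conf.Qu (h : Conf GC Z G X Y L a u Q w d R) : ∃ Q1, Q = u :: Q1 := by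
  have := h.hQu
  cases Q with
  | nil => simp at this
  | cons x Q => simp at this; exact ⟨Q, by rw [this]⟩

lemma Conf.Qw (h : Conf GC Z G X Y L a u Q w d R) : ∃ Q2, Q = Q2 ++ [w] := by
  obtain ⟨Q2, hQ⟩ := h.symm.Qu
  exact ⟨Q2.reverse, by rw [← List.reverse_reverse Q, hQ]; simp⟩

lemma Conf.memu (h : Conf GC Z G X Y L a u Q w d R) : u ∈ Q := by
  obtain ⟨Q1, rfl⟩ := h.Qu; simp

lemma Conf.memw (h : Conf GC Z G X Y L a u Q w d R) : w ∈ Q := by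
  obtain ⟨Q1, rfl⟩ := h.Qw; simp

lemma Conf.lenQ (h : Conf GC Z G X Y L a u Q w d R) : 2 ≤ Q.length := by
  obtain ⟨Q1, rfl⟩ := h.Qu
  have := h.memw
  simp only [List.mem_cons] at this
  rcases this with h' | h'
  · exact absurd h'.symm h.hne
  · have := List.length_pos_of_mem h'
    simp; omega

lemma Conf.actL (h : Conf GC Z G X Y L a u Q w d R) : Act G Z (L ++ [a, u]) := by
  obtain ⟨Q1, hQ⟩ := h.Qu
  have := h.act
  rw [hQ] at this
  exact ((act_glue L a u _).1 this).1

lemma Conf.actR (h : Conf GC Z G X Y L a u Q w d R) : Act G Z (w :: d :: R) := by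
  have := h.symm.actL.reverse
  simpa using this

/-- Disjointness of the parts of the path. -/
lemma Conf.disj (h : Conf GC Z G X Y L a u Q w d R) :
    L.Nodup ∧ R.Nodup ∧ a ∉ L ∧ d ∉ R ∧ a ≠ d ∧ a ∉ R ∧ d ∉ L ∧ (∀ x ∈ L, x ∉ R) ∧
    (∀ x ∈ Q, x ≠ a ∧ x ≠ d ∧ x ∉ L ∧ x ∉ R) ∧ Q.Nodup := by
  have := h.nodup
  simp only [List.nodup_append, List.nodup_cons, List.mem_append, List.mem_cons, not_or] at this
  obtain ⟨h1, ⟨⟨h2, h3, h4⟩, h5, ⟨h6, h7⟩, h8⟩, h9⟩ := this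
  refine ⟨h1, h7, ?_, h6, h3, h4, ?_, ?_, ?_, h5⟩
  · intro hh; exact h9 a hh a (by simp) rfl
  · intro hh; exact h9 d hh d (by simp) rfl
  · intro x hx hx'; exact h9 x hx x (by simp [hx']) rfl
  · intro x hx
    refine ⟨?_, ?_, ?_, ?_⟩
    · rintro rfl; exact h2 hx
    · rintro rfl; exact h8 x hx x (by simp) rfl
    · intro hx'; exact h9 x hx' x (by simp [hx]) rfl
    · intro hx'; exact h8 x hx x (by simp [hx']) rfl

lemma getLast_app {W : Type*} (L : List W) (a : W) (M : List W) (d : W) (R : List W) :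
    (L ++ a :: (M ++ d :: R)).getLast? = (d :: R).getLast? := by
  rw [show L ++ a :: (M ++ d :: R) = (L ++ a :: M) ++ (d :: R) by simp]
  exact List.getLast?_append_of_ne_nil _ (by simp)

lemma Conf.finish (h : Conf GC Z G X Y L a u Q w d R) {G' : MixedGraph GC.MicroV}
    (hc : GC.Compatible G') (M : List GC.MicroV) (hM : M.Sublist Q) (hlen : M.length < Q.length)
    (hact : Act G' Z (L ++ a :: (M ++ d :: R))) :
    Shorter GC Z X Y (L ++ a :: (Q ++ d :: R)).length := by
  refine ⟨G', hc, _, hact, ?_, ?_, ?_, ?_⟩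
  · refine h.nodup.sublist ?_
    exact (List.Sublist.refl L).append ((hM.append (List.Sublist.refl _)).cons_cons a)
  · have := h.hx
    cases L <;> simpa using this
  · have := h.hy
    rwa [getLast_app]
  · simp; omega

/-- Bypass `u` by joining `a` to `w`. -/
lemma opB (h : Conf GC Z G X Y L a u Q w d R) (hau : G.intoHead a u) (hdw : G.intoHead d w)
    (hw : An G Z w) (hn : ¬ Relation.ReflTransGen G.dir w u) :
    Shorter GC Z X Y (L ++ a :: (Q ++ d :: R)).length := by
  obtain ⟨-, -, haL, hdR, had, haR, hdL, hLR, hQ, -⟩ := h.disj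
  obtain ⟨hua, hud, huL, huR⟩ := hQ u h.memu
  obtain ⟨hwa, hwd, hwL, hwR⟩ := hQ w h.memw
  set G' := cp G u w a a w (G.dir a u) with hG'
  have hef : isp a w w a := Or.inr ⟨rfl, rfl⟩
  have hAn : ∀ x, An G Z x → An G' Z x := fun x hx => cp_an x hx
  have hc : GC.Compatible G' := by
    refine cp_compat h.compat h.huw h.hne hua hwa (fun hd => Or.inl ⟨rfl, rfl, hd⟩) ?_
    intro hd hr
    exact hn (hr.tail hd)
  have hbi : G'.bidir w a ↔ G.bidir u a := cp_bidir_tn h.hne hwa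
  have hinto : G'.intoHead a w := by
    rcases hau with h' | h'
    · exact Or.inl (Or.inr ⟨h', rfl, rfl⟩)
    · exact Or.inr (bidir_comm.1 (hbi.2 (bidir_comm.1 h')))
  have hinto2 : G'.intoHead w a ↔ G.intoHead u a := by
    unfold MixedGraph.intoHead
    rw [hbi]
    by_cases hb : G.bidir u a
    · simp [hb]
    · have hd : G.dir a u := hau.resolve_right fun h' => hb (bidir_comm.1 h')
      have h1 : ¬ G'.dir w a := by
        rintro (h' | ⟨_, h', _⟩)
        · exact hn ((Relation.ReflTransGen.single h').tail hd)
        · exact hwa h'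
      have h2 : ¬ G.dir u a := fun h' => h.compat.1 u ((Relation.TransGen.single h').tail hd)
      tauto
  have hagdw : G'.intoHead d w ↔ G.intoHead d w :=
    (cp_agree hef (Or.inl ⟨had.symm, hwa⟩)).into
  have hR : Act G' Z (w :: d :: R) := by
    refine h.actR.transport hAn ?_
    intro x hx y hy
    refine cp_agree hef (Or.inl ⟨?_, ?_⟩)
    · rintro rfl; simp at hx; tauto
    · rintro rfl; simp at hy; tauto
  have hL : Act G' Z (L ++ [a]) := by
    have h0 : Act G Z (L ++ [a]) := by
      have := h.actL
      rw [show L ++ [a, u] = (L ++ [a]) ++ [u] by simp] at this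
      exact this.left
    refine h0.transport hAn ?_
    intro x hx y hy
    refine cp_agree hef (Or.inr ?_)
    simp only [List.mem_append, List.mem_singleton] at hx hy
    refine ⟨?_, ?_, ?_, ?_⟩ <;> rintro rfl <;> tauto
  refine h.finish hc [w] (by simpa using h.memw) (by have := h.lenQ; simp; omega) ?_
  simp only [List.cons_append, List.nil_append]
  rw [act_glue]
  refine ⟨act_replace_last hAn h.actL hL (adj_of_into hinto) ?_ hinto2, ?_⟩
  · intro x hx
    refine cp_agree hef (Or.inr ⟨?_, ?_, hua.symm, hwa.symm⟩) <;> rintro rfl <;> tauto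
  · refine ⟨adj_of_into hinto, ?_, hR⟩
    rw [activeTriple_iff]
    refine ⟨fun _ => hAn _ hw, fun hcol => absurd ⟨hinto, hagdw.2 hdw⟩ hcol⟩

/-- Bypass `w` by joining `u` to `d`. -/
lemma opA (h : Conf GC Z G X Y L a u Q w d R) (hwd' : G.dir w d) (huZ : u ∉ Z)
    (hu : G.bidir w d → G.intoHead a u → An G Z u)
    (hn : ¬ Relation.ReflTransGen G.dir w u) :
    Shorter GC Z X Y (L ++ a :: (Q ++ d :: R)).length := by
  obtain ⟨-, -, haL, hdR, had, haR, hdL, hLR, hQ, -⟩ := h.disj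
  obtain ⟨hua, hud, huL, huR⟩ := hQ u h.memu
  obtain ⟨hwa, hwd, hwL, hwR⟩ := hQ w h.memw
  set G' := cp G w u d u d True with hG'
  have hef : isp u d u d := Or.inl ⟨rfl, rfl⟩
  have hAn : ∀ x, An G Z x → An G' Z x := fun x hx => cp_an x hx
  have hnd : ¬ Relation.ReflTransGen G.dir d u := fun hr => hn (Relation.ReflTransGen.head hwd' hr)
  have hc : GC.Compatible G' := by
    refine cp_compat h.compat h.huw.symm h.hne.symm hwd hud
      (fun _ => Or.inr ⟨rfl, rfl, hwd'⟩) (fun _ => hnd)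
  have hbi : G'.bidir u d ↔ G.bidir w d := cp_bidir_tn h.hne.symm hud
  have hdud : G'.dir u d := Or.inr ⟨trivial, rfl, rfl⟩
  have hagau : G'.intoHead a u ↔ G.intoHead a u :=
    (cp_agree hef (Or.inl ⟨had, hud⟩)).into
  have hL : Act G' Z (L ++ [a, u]) := by
    refine h.actL.transport hAn ?_
    intro x hx y hy
    refine cp_agree hef (Or.inl ⟨?_, ?_⟩)
    · rintro rfl; simp at hx; tauto
    · rintro rfl; simp at hy; tauto
  have hR : Act G' Z (d :: R) := by
    refine h.actR.tail.transport hAn ?_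
    intro x hx y hy
    refine cp_agree hef (Or.inr ?_)
    simp only [List.mem_cons] at hx hy
    refine ⟨?_, ?_, ?_, ?_⟩
    · intro e; rw [e] at hx; exact hx.elim hwd hwR
    · intro e; rw [e] at hx; exact hx.elim hud huR
    · intro e; rw [e] at hy; exact hy.elim hwd hwR
    · intro e; rw [e] at hy; exact hy.elim hud huR
  have hR2 : Act G' Z (u :: d :: R) := by
    refine act_replace_head hAn h.actR hR (Or.inl hdud) ?_ ?_
    · intro x hx
      refine cp_agree hef (Or.inr ⟨?_, ?_, hwd.symm, hud.symm⟩)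
      · intro e; rw [e] at hx; exact hwR hx
      · intro e; rw [e] at hx; exact huR hx
    · exact ⟨fun _ => Or.inl hwd', fun _ => Or.inl hdud⟩
  refine h.finish hc [u] (by simpa using h.memu) (by have := h.lenQ; simp; omega) ?_
  simp only [List.cons_append, List.nil_append]
  rw [act_glue]
  refine ⟨hL, (act_cons.1 (hL.right)).1, ?_, hR2⟩
  rw [activeTriple_iff]
  refine ⟨fun hcol => ?_, fun _ => huZ⟩
  have hdu : ¬ G'.dir d u := by
    rintro (h' | ⟨_, h', _⟩)
    · exact hnd (.single h')
    · exact hud h'.symm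
  have hb : G.bidir w d := hbi.1 (bidir_comm.1 (hcol.2.resolve_left hdu))
  exact hAn _ (hu hb (hagau.1 hcol.1))

/-- Join `u` to the predecessor `c` of `w`. -/
lemma opC (h : Conf GC Z G X Y L a u Q w d R) {M : List GC.MicroV} {c : GC.MicroV}
    (hM : M ≠ [])
    (hQM : Q = u :: (M ++ [c, w])) (hcw : G.dir c w) (hau : G.intoHead a u)
    (hu : An G Z u) (hn : ¬ Relation.ReflTransGen G.dir u w) :
    Shorter GC Z X Y (L ++ a :: (Q ++ d :: R)).length := by
  obtain ⟨-, -, haL, hdR, had, haR, hdL, hLR, hQ, hQnd⟩ := h.disj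
  obtain ⟨hua, hud, huL, huR⟩ := hQ u h.memu
  obtain ⟨hwa, hwd, hwL, hwR⟩ := hQ w h.memw
  obtain ⟨hca, hcd, hcL, hcR⟩ := hQ c (by rw [hQM]; simp)
  have huc : u ≠ c := by rintro rfl; rw [hQM] at hQnd; simp at hQnd
  have hwc : w ≠ c := by rintro rfl; rw [hQM] at hQnd; simp [List.nodup_append] at hQnd
  set G' := cp G w u c c u True with hG'
  have hef : isp c u u c := Or.inr ⟨rfl, rfl⟩
  have hAn : ∀ x, An G Z x → An G' Z x := fun x hx => cp_an x hx
  have hnc : ¬ Relation.ReflTransGen G.dir u c := fun hr => hn (hr.tail hcw)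
  have hc : GC.Compatible G' := by
    refine cp_compat h.compat h.huw.symm h.hne.symm hwc huc
      (fun _ => Or.inl ⟨rfl, rfl, hcw⟩) (fun _ => hnc)
  have hbi : G'.bidir u c ↔ G.bidir w c := cp_bidir_tn h.hne.symm huc
  have hdcu : G'.dir c u := Or.inr ⟨trivial, rfl, rfl⟩
  have hdcw : G'.dir c w := Or.inl hcw
  have hL : Act G' Z (L ++ [a, u]) := by
    refine h.actL.transport hAn ?_
    intro x hx y hy
    refine cp_agree hef (Or.inl ⟨?_, ?_⟩)
    · rintro rfl; simp at hx; tauto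
    · rintro rfl; simp at hy; tauto
  have hR : Act G' Z (w :: d :: R) := by
    refine h.actR.transport hAn ?_
    intro x hx y hy
    refine cp_agree hef (Or.inl ⟨?_, ?_⟩)
    · rintro rfl; simp at hx; tauto
    · rintro rfl; simp at hy; tauto
  have hagau : G'.intoHead a u ↔ G.intoHead a u :=
    (cp_agree hef (Or.inl ⟨hca.symm, huc⟩)).into
  have hagdw : G'.intoHead d w ↔ G.intoHead d w :=
    (cp_agree hef (Or.inl ⟨hcd.symm, hwc⟩)).into
  -- the last element of `M`
  obtain ⟨M', c', rfl⟩ : ∃ M' c', M = M' ++ [c'] :=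
    ⟨M.dropLast, M.getLast hM, (List.dropLast_append_getLast hM).symm⟩
  have hactQ := h.actQ
  have htri : G.ActiveTriple Z c' c w := by
    rw [hQM] at hactQ
    rw [show u :: (M' ++ [c'] ++ [c, w]) = (u :: M') ++ [c', c, w] by simp] at hactQ
    exact hactQ.right.2.1
  have htriw : G.ActiveTriple Z c w d := by
    have := h.act
    rw [hQM] at this
    rw [show L ++ a :: (u :: (M' ++ [c'] ++ [c, w]) ++ d :: R) =
      (L ++ a :: u :: (M' ++ [c'])) ++ c :: w :: d :: R by simp] at this
    exact this.right.2.1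
  have hwc' : ¬ G.dir w c := fun h' => h.compat.1 w ((Relation.TransGen.single h').tail hcw)
  refine h.finish hc [u, c, w] ?_ ?_ ?_
  · rw [hQM]
    refine List.Sublist.cons_cons u ?_
    exact List.sublist_append_right _ _
  · rw [hQM]; simp
  simp only [List.cons_append, List.nil_append]
  rw [act_glue]
  refine ⟨hL, (act_cons.1 (hL.right)).1, ?_, Or.inr (Or.inl hdcu), ?_, Or.inl hdcw, ?_, hR⟩
  · rw [activeTriple_iff]
    exact ⟨fun _ => hAn _ hu, fun hcol => absurd ⟨hagau.2 hau, Or.inl hdcu⟩ hcol⟩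
  · rw [activeTriple_iff]
    rw [activeTriple_iff] at htri
    by_cases hb : G.bidir w c
    · have hwcb : G'.bidir w c := by
        refine Or.inl ⟨hb, ?_⟩
        rintro (⟨h', _⟩ | ⟨h', _⟩)
        · exact h.hne h'.symm
        · exact hwc h'
      have hcol : G'.Collider u c w := ⟨Or.inr (hbi.2 hb), Or.inr hwcb⟩
      refine ⟨fun _ => hAn _ ?_, fun h' => absurd hcol h'⟩
      by_cases hco : G.Collider c' c w
      · exact htri.1 hco
      · have hni : ¬ G.intoHead c' c := fun h' => hco ⟨h', Or.inr hb⟩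
        have hadj : G.adj c c' := by
          have := hactQ.reverse
          rw [hQM] at this
          simp only [List.reverse_cons, List.reverse_append, List.reverse_nil, List.nil_append,
            List.cons_append] at this
          exact (act_cons.1 this.tail).1
        have hd : G.dir c c' := by
          rcases hadj with h' | h' | h'
          · exact h'
          · exact absurd (Or.inl h') hni
          · exact absurd (Or.inr (bidir_comm.1 h')) hni
        have hact : Act G Z (c :: c' :: (M'.reverse ++ [u])) := by
          have := hactQ.reverse
          rw [hQM] at this
          simp only [List.reverse_cons, List.reverse_append, List.reverse_nil, List.nil_append,
            List.cons_append] at this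
          exact this.tail
        rcases follow _ _ _ hd hact with h' | h'
        · exact h'
        · exact An.rtg (chain_rtg h' (by simp) (w := u)
            (by rw [← List.cons_append, ← List.cons_append]; exact List.getLast?_concat)) hu
    · have hno : ¬ G'.Collider u c w := by
        rintro ⟨h' | h', _⟩
        · rcases h' with h' | ⟨_, h', _⟩
          · exact hnc (.single h')
          · exact huc h'
        · exact hb (hbi.1 h')
      refine ⟨fun h' => absurd h' hno, fun _ => htri.2 ?_⟩
      rintro ⟨_, h' | h'⟩
      · exact hwc' h'
      · exact hb h'
  · exact triple_congr hAn ⟨fun _ => Or.inl hcw, fun _ => Or.inl hdcw⟩ hagdw htriw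

/-- Configuration with the inner neighbours `b` of `u` and `c` of `w`. -/
structure Conf2 (G : MixedGraph GC.MicroV) (X Y : Set GC.MicroV) (L : List GC.MicroV)
    (a u b : GC.MicroV) (Q : List GC.MicroV) (c w d : GC.MicroV) (R : List GC.MicroV) : Prop where
  conf : Conf GC Z G X Y L a u Q w d R
  hb : ∃ Q1, Q = u :: b :: Q1
  hc : ∃ Q2, Q = Q2 ++ [c, w]

variable {b c : GC.MicroV}

lemma Conf2.symm (h : Conf2 (Z := Z) G X Y L a u b Q c w d R) :
    Conf2 (Z := Z) G Y X R.reverse d w c Q.reverse b u a L.reverse where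
  conf := h.conf.symm
  hb := by obtain ⟨Q2, h⟩ := h.hc; exact ⟨Q2.reverse, by rw [h]; simp⟩
  hc := by obtain ⟨Q2, h⟩ := h.hb; exact ⟨Q2.reverse, by rw [h]; simp⟩

lemma Conf2.flip (h : Conf2 (Z := Z) G X Y L a u b Q c w d R)
    (hs : Shorter GC Z Y X (R.reverse ++ d :: (Q.reverse ++ a :: L.reverse)).length) :
    Shorter GC Z X Y (L ++ a :: (Q ++ d :: R)).length := by
  have := hs.symm
  rwa [Conf.len] at this

lemma Conf2.follow (h : Conf2 (Z := Z) G X Y L a u b Q c w d R) (hub : G.dir u b) :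
    An G Z u ∨ (G.dir c w ∧ Relation.ReflTransGen G.dir u w) := by
  obtain ⟨Q1, hQ⟩ := h.hb
  have hact := h.conf.actQ
  rw [hQ] at hact
  rcases RCP.follow _ _ _ hub hact with h' | h'
  · exact Or.inl h'
  · rw [← hQ] at h'
    refine Or.inr ⟨?_, chain_rtg h' h.conf.hQu h.conf.hQw⟩
    obtain ⟨Q2, hQ2⟩ := h.hc
    rw [hQ2] at h'
    have := (List.isChain_append.1 h').2.1
    simpa using this

lemma Conf2.triu (h : Conf2 (Z := Z) G X Y L a u b Q c w d R) : G.ActiveTriple Z a u b := by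
  obtain ⟨Q1, hQ⟩ := h.hb
  have := h.conf.act
  rw [hQ] at this
  exact this.right.2.1

lemma Conf2.triw (h : Conf2 (Z := Z) G X Y L a u b Q c w d R) : G.ActiveTriple Z c w d :=
  triple_symm h.symm.triu

lemma Conf2.total (h : Conf2 (Z := Z) G X Y L a u b Q c w d R) :
    ¬ Relation.ReflTransGen G.dir w u ∨ ¬ Relation.ReflTransGen G.dir u w := by
  by_contra hcon
  push Not at hcon
  rcases Relation.reflTransGen_iff_eq_or_transGen.1 hcon.1 with h' | h'
  · exact h.conf.hne h'
  · exact h.conf.compat.1 w (h'.trans_left hcon.2)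

lemma red_collider (h : Conf2 (Z := Z) G X Y L a u b Q c w d R)
    (h1 : G.Collider a u b) (h2 : G.Collider c w d) :
    Shorter GC Z X Y (L ++ a :: (Q ++ d :: R)).length := by
  rcases h.total with hn | hn
  · exact opB h.conf h1.1 h2.2 ((activeTriple_iff.1 h.triw).1 h2) hn
  · exact h.flip (opB h.symm.conf h2.2 h1.1 ((activeTriple_iff.1 h.triu).1 h1) hn)

lemma red_fork_aux (h : Conf2 (Z := Z) G X Y L a u b Q c w d R)
    (huZ : u ∉ Z) (hub : G.dir u b) (hwc : G.dir w c) (hwd : G.dir w d)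
    (hn : ¬ Relation.ReflTransGen G.dir w u) :
    Shorter GC Z X Y (L ++ a :: (Q ++ d :: R)).length := by
  refine opA h.conf hwd huZ (fun _ _ => ?_) hn
  rcases h.follow hub with h' | h'
  · exact h'
  · exact absurd ((Relation.TransGen.single h'.1).tail hwc) (h.conf.compat.1 c)

lemma red_fork (h : Conf2 (Z := Z) G X Y L a u b Q c w d R) (huZ : u ∉ Z) (hwZ : w ∉ Z)
    (h1 : ForkAt G a u b) (h2 : ForkAt G c w d) :
    Shorter GC Z X Y (L ++ a :: (Q ++ d :: R)).length := by
  rcases h.total with hn | hn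
  · exact red_fork_aux h huZ h1.2 h2.1 h2.2 hn
  · exact h.flip (red_fork_aux h.symm hwZ h2.1 h1.2 h1.1 hn)

lemma red_same (h : Conf2 (Z := Z) G X Y L a u b Q c w d R) (huZ : u ∉ Z)
    (hau : G.dir a u) (hub : G.dir u b) (hcw : G.dir c w) (hwd : G.dir w d) :
    Shorter GC Z X Y (L ++ a :: (Q ++ d :: R)).length := by
  by_cases hn : Relation.ReflTransGen G.dir w u
  · have hn' : ¬ Relation.ReflTransGen G.dir u w := h.total.resolve_left (fun h' => h' hn)
    have hu : An G Z u := (h.follow hub).resolve_right fun h' => hn' h'.2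
    obtain ⟨Q1, hQ1⟩ := h.hb
    obtain ⟨Q2, hQ2⟩ := h.hc
    match Q2, hQ2 with
    | [], hQ2 =>
      rw [hQ1] at hQ2
      simp at hQ2
      rw [hQ2.1] at hn'
      exact absurd (.single hcw) hn'
    | [x], hQ2 =>
      rw [hQ1] at hQ2
      simp at hQ2
      rw [hQ2.2.1] at hub
      exact absurd ((Relation.ReflTransGen.single hub).tail hcw) hn'
    | x :: y :: M, hQ2 =>
      have hux : u = x := by rw [hQ1] at hQ2; simp at hQ2; exact hQ2.1
      subst hux
      exact opC h.conf (M := y :: M) (by simp) (by rw [hQ2]; simp) hcw (Or.inl hau) hu hn'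
  · refine opA h.conf hwd huZ (fun hb _ => ?_) hn
    rcases h.follow hub with h' | h'
    · exact h'
    · exact An.rtg h'.2 ((activeTriple_iff.1 h.triw).1 ⟨Or.inl hcw, Or.inr (bidir_comm.1 hb)⟩)

lemma red_in (h : Conf2 (Z := Z) G X Y L a u b Q c w d R)
    (hau : G.dir a u) (hwc : G.dir w c) (hdw : G.dir d w)
    (hn : ¬ Relation.ReflTransGen G.dir w u) :
    Shorter GC Z X Y (L ++ a :: (Q ++ d :: R)).length := by
  refine opB h.conf (Or.inl hau) (Or.inl hdw) ?_ hn
  exact (h.symm.follow hwc).resolve_right fun h' => hn h'.2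

lemma red_out (h : Conf2 (Z := Z) G X Y L a u b Q c w d R) (huZ : u ∉ Z)
    (hbu : G.dir b u) (hwd : G.dir w d)
    (hn : ¬ Relation.ReflTransGen G.dir w u) :
    Shorter GC Z X Y (L ++ a :: (Q ++ d :: R)).length := by
  refine opA h.conf hwd huZ (fun _ hau => ?_) hn
  exact (activeTriple_iff.1 h.triu).1 ⟨hau, Or.inl hbu⟩

lemma red_chain (h : Conf2 (Z := Z) G X Y L a u b Q c w d R) (huZ : u ∉ Z) (hwZ : w ∉ Z)
    (h1 : ChainAt G a u b) (h2 : ChainAt G c w d) :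
    Shorter GC Z X Y (L ++ a :: (Q ++ d :: R)).length := by
  rcases h1 with ⟨h1, h1'⟩ | ⟨h1, h1'⟩ <;> rcases h2 with ⟨h2, h2'⟩ | ⟨h2, h2'⟩
  · exact red_same h huZ h1 h1' h2 h2'
  · rcases h.total with hn | hn
    · exact red_in h h1 h2' h2 hn
    · exact h.flip (red_in h.symm h2 h1' h1 hn)
  · rcases h.total with hn | hn
    · exact red_out h huZ h1 h2' hn
    · exact h.flip (red_out h.symm hwZ h2 h1' hn)
  · exact h.flip (red_same h.symm hwZ h2 h2' h1 h1')

lemma split_list {W : Type*} (p : List W) (i j : ℕ) (hij : i < j) (hj : j + 2 < p.length) :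
    ∃ L Q R, p = L ++ p[i] :: (Q ++ p[j+2] :: R) ∧ (∃ Q1, Q = p[i+1] :: p[i+2] :: Q1) ∧
      ∃ Q2, Q = Q2 ++ [p[j], p[j+1]] := by
  have e1 : p = p.take i ++ p[i] :: p.drop (i+1) := by simp
  have e2 : p.drop (i+1) = (p.drop (i+1)).take (j-i+1) ++ p[j+2] :: p.drop (j+3) := by
    conv_lhs => rw [← List.take_append_drop (j-i+1) (p.drop (i+1))]
    rw [List.drop_drop, show i + 1 + (j - i + 1) = j + 2 by omega, List.drop_eq_getElem_cons hj]
  refine ⟨p.take i, (p.drop (i+1)).take (j-i+1), p.drop (j+3), ?_, ?_, ?_⟩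
  · rw [← e2]; exact e1
  · refine ⟨(p.drop (i+3)).take (j-i-1), ?_⟩
    rw [List.drop_eq_getElem_cons (i := i+1) (by omega),
      List.drop_eq_getElem_cons (i := i+1+1) (by omega),
      show j - i + 1 = (j - i - 1) + 1 + 1 by omega, List.take_succ_cons, List.take_succ_cons]
  · refine ⟨(p.drop (i+1)).take (j-i-1), ?_⟩
    apply List.ext_getElem
    · simp; omega
    · intro k h1 h2
      simp only [List.length_take, List.length_drop] at h1
      have hlen : ((p.drop (i+1)).take (j-i-1)).length = j-i-1 := by simp; omega
      by_cases hk : k < j - i - 1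
      · rw [List.getElem_append_left (by omega)]; simp
      · rw [List.getElem_append_right (by omega)]
        obtain hk | hk : k = j - i - 1 ∨ k = j - i := by omega
        · have : k - ((p.drop (i+1)).take (j-i-1)).length = 0 := by omega
          simp only [this, List.getElem_cons_zero, List.getElem_take, List.getElem_drop]
          congr 1; omega
        · have : k - ((p.drop (i+1)).take (j-i-1)).length = 1 := by omega
          simp only [this, List.getElem_cons_succ, List.getElem_cons_zero, List.getElem_take,
            List.getElem_drop]
          congr 1; omega

lemma mk_conf {p : List GC.MicroV} {Vc : C} (hc : GC.Compatible G)
    (hact : Act G Z p) (hnd : p.Nodup) (hx : ∃ x ∈ X, p.head? = some x)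
    (hy : ∃ y ∈ Y, p.getLast? = some y) (i j : ℕ) (hij : i < j) (hj : j + 2 < p.length)
    (hu : p[i+1].1 = Vc) (hw : p[j+1].1 = Vc) :
    ∃ L Q R, p = L ++ p[i] :: (Q ++ p[j+2] :: R) ∧
      Conf2 (Z := Z) G X Y L p[i] p[i+1] p[i+2] Q p[j] p[j+1] p[j+2] R := by
  obtain ⟨L, Q, R, hp, hQ1, hQ2⟩ := split_list p i j hij hj
  refine ⟨L, Q, R, hp, ⟨hc, by rw [← hp]; exact hact, by rw [← hp]; exact hnd, ?_, ?_, ?_, ?_,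
    hu.trans hw.symm, ?_⟩, hQ1, hQ2⟩
  · rw [hp] at hx
    generalize p[i] = a at *
    cases L <;> simpa using hx
  · rw [hp] at hy
    generalize p[j+2] = d at *
    rwa [getLast_app] at hy
  · obtain ⟨Q1, h⟩ := hQ1; rw [h]; simp
  · obtain ⟨Q1, h⟩ := hQ2; rw [h]; simp
  · intro h
    rw [hnd.getElem_inj_iff] at h
    omega

lemma not_amo {W : Type*} {P : W → W → W → Prop} {T : Set W} {p : List W}
    (h : ¬ AtMostOneTriple P T p) : ∃ (i j : ℕ) (_ : i < j) (hj : j + 2 < p.length),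
      P p[i] p[i+1] p[i+2] ∧ P p[j] p[j+1] p[j+2] ∧ p[i+1] ∈ T ∧ p[j+1] ∈ T := by
  unfold AtMostOneTriple at h
  push Not at h
  obtain ⟨i, j, hi, hj, h1, h2, h3, h4, hne⟩ := h
  rcases Nat.lt_or_gt_of_ne hne with h | h
  · exact ⟨i, j, h, hj, h1, h2, h3, h4⟩
  · exact ⟨j, i, h, hi, h2, h1, h4, h3⟩

lemma main_induction (Zc : Set C) (Vc : C) (k : ℕ) (G : MixedGraph GC.MicroV)
    (p : List GC.MicroV) (hk : p.length = k) (hc : GC.Compatible G)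
    (hact : Act G (GC.microSet Zc) p) (hnd : p.Nodup) (hx : ∃ x ∈ X, p.head? = some x)
    (hy : ∃ y ∈ Y, p.getLast? = some y) :
    ∃ Gm' : MixedGraph GC.MicroV, GC.Compatible Gm' ∧
      ∃ p' : List GC.MicroV, Gm'.ActivePath (GC.microSet Zc) p' ∧
        (∃ x ∈ X, p'.head? = some x) ∧
        (∃ y ∈ Y, p'.getLast? = some y) ∧
        AtMostOneTriple Gm'.Collider {v : GC.MicroV | v.1 = Vc} p' ∧
        AtMostOneTriple (ForkAt Gm') {v : GC.MicroV | v.1 = Vc} p' ∧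
        AtMostOneTriple (ChainAt Gm') {v : GC.MicroV | v.1 = Vc} p' := by
  induction k using Nat.strong_induction_on generalizing G p with
  | _ k ih =>
    have key : Shorter GC (GC.microSet Zc) X Y p.length →
        ∃ Gm' : MixedGraph GC.MicroV, GC.Compatible Gm' ∧
      ∃ p' : List GC.MicroV, Gm'.ActivePath (GC.microSet Zc) p' ∧
        (∃ x ∈ X, p'.head? = some x) ∧
        (∃ y ∈ Y, p'.getLast? = some y) ∧
        AtMostOneTriple Gm'.Collider {v : GC.MicroV | v.1 = Vc} p' ∧
        AtMostOneTriple (ForkAt Gm') {v : GC.MicroV | v.1 = Vc} p' ∧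
        AtMostOneTriple (ChainAt Gm') {v : GC.MicroV | v.1 = Vc} p' := by
      rintro ⟨G', h1, p', h2, h3, h4, h5, h6⟩
      exact ih p'.length (by omega) G' p' rfl h1 h2 h3 h4 h5
    have colZ : ∀ {a b c : GC.MicroV}, Vc ∈ Zc → b.1 = Vc →
        G.ActiveTriple (GC.microSet Zc) a b c → G.Collider a b c := by
      intro a b c hV hb ht
      by_contra hcol
      exact ht.2 hcol (by change b.1 ∈ Zc; rw [hb]; exact hV)
    have nZ : ∀ {b : GC.MicroV}, Vc ∉ Zc → b.1 = Vc → b ∉ GC.microSet Zc := by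
      intro b hV hb hbZ
      exact hV (by rw [← hb]; exact hbZ)
    by_cases h1 : AtMostOneTriple G.Collider {v : GC.MicroV | v.1 = Vc} p
    · by_cases h2 : AtMostOneTriple (ForkAt G) {v : GC.MicroV | v.1 = Vc} p
      · by_cases h3 : AtMostOneTriple (ChainAt G) {v : GC.MicroV | v.1 = Vc} p
        · have hne : p ≠ [] := by rintro rfl; simp at hx
          exact ⟨G, hc, p, ⟨activeWalk_of_act hne hact, hnd⟩, hx, hy, h1, h2, h3⟩
        · obtain ⟨i, j, hij, hj, p1, p2, t1, t2⟩ := not_amo h3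
          obtain ⟨L, Q, R, hp, hconf⟩ := mk_conf hc hact hnd hx hy i j hij hj t1 t2
          apply key
          rw [hp]
          by_cases hV : Vc ∈ Zc
          · exact red_collider hconf (colZ hV t1 hconf.triu) (colZ hV t2 hconf.triw)
          · exact red_chain hconf (nZ hV t1) (nZ hV t2) p1 p2
      · obtain ⟨i, j, hij, hj, p1, p2, t1, t2⟩ := not_amo h2
        obtain ⟨L, Q, R, hp, hconf⟩ := mk_conf hc hact hnd hx hy i j hij hj t1 t2
        apply key
        rw [hp]
        by_cases hV : Vc ∈ Zc
        · exact red_collider hconf (colZ hV t1 hconf.triu) (colZ hV t2 hconf.triw)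
        · exact red_fork hconf (nZ hV t1) (nZ hV t2) p1 p2
    · obtain ⟨i, j, hij, hj, p1, p2, t1, t2⟩ := not_amo h1
      obtain ⟨L, Q, R, hp, hconf⟩ := mk_conf hc hact hnd hx hy i j hij hj t1 t2
      apply key
      rw [hp]
      exact red_collider hconf p1 p2

end main

end RCP

/-- Reducing the complexity of an active path within a single cluster:
an active path can be replaced (in some compatible micro graph) by one with at most one
collider, at most one fork and at most one chain among the variables of cluster `V`. -/
theorem reduce_complexity_path {C : Type*} [Fintype C] (GC : ClusterDAG C)
    (hadm : GC.Admissible)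
    (Xc Yc Zc : Set C) (hXY : Disjoint Xc Yc) (hXZ : Disjoint Xc Zc) (hYZ : Disjoint Yc Zc)
    (Vc : C) (Gm : MixedGraph GC.MicroV) (hGm : GC.Compatible Gm)
    (p : List GC.MicroV) (hp : Gm.ActivePath (GC.microSet Zc) p)
    (hx : ∃ x ∈ GC.microSet Xc, p.head? = some x)
    (hy : ∃ y ∈ GC.microSet Yc, p.getLast? = some y) :
    ∃ Gm' : MixedGraph GC.MicroV, GC.Compatible Gm' ∧
      ∃ p' : List GC.MicroV, Gm'.ActivePath (GC.microSet Zc) p' ∧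
        (∃ x ∈ GC.microSet Xc, p'.head? = some x) ∧
        (∃ y ∈ GC.microSet Yc, p'.getLast? = some y) ∧
        AtMostOneTriple Gm'.Collider {v : GC.MicroV | v.1 = Vc} p' ∧
        AtMostOneTriple (ForkAt Gm') {v : GC.MicroV | v.1 = Vc} p' ∧
        AtMostOneTriple (ChainAt Gm') {v : GC.MicroV | v.1 = Vc} p' := by
  exact RCP.main_induction Zc Vc p.length Gm p rfl hGm (RCP.act_of_activeWalk hp.1) hp.2 hx hy
end

section
/- Let G^C be an admissible cluster-DAG and let G^C_{≤4} be the cluster-DAG obtained from G^C by reducing the size of every cluster of size greater than 4 to size 4 (keeping the same edges). Let X^C, Y^C, Z^C be pairwise disjoint sets of clusters. Then the following are equivalent: (1) there exists a micro graph G^m compatible with G^C containing a Z^m-active path from X^m to Y^m; (2) there exists a micro graph compatible with G^C_{≤4} containing a Z^m-active path from X^m to Y^m (where X^m, Y^m, Z^m are the corresponding variable sets in each case). -/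
variable {V : Type*}

namespace InfFour

/-- A node of a path with explicit marks: `ml` (`mr`) says whether the edge of the path on the left
(right) has an arrowhead at the node. -/
structure Nd (V : Type*) where
  x : V
  ml : Bool
  mr : Bool

/-- The edge between `a` and `b` with marks `ma` at `a` and `mb` at `b`. -/
def Edge {V : Type*} (G : MixedGraph V) (a b : V) : Bool → Bool → Prop
  | true, true => G.bidir a b
  | false, true => G.dir a b ∧ ¬ G.bidir a b
  | true, false => G.dir b a ∧ ¬ G.bidir a b
  | false, false => False

def An {V C : Type*} (κ : V → C) (Zc : Set C) (G : MixedGraph V) (x : V) : Prop :=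
  ∃ z, κ z ∈ Zc ∧ Relation.ReflTransGen G.dir x z

def LinkE {V : Type*} (E : V → V → Bool → Bool → Prop) (a b : Nd V) : Prop :=
  E a.x b.x a.mr b.ml

def MidN {V C : Type*} (κ : V → C) (Zc : Set C) (N : V → Prop) (n : Nd V) : Prop :=
  (n.ml = true ∧ n.mr = true → N n.x) ∧ (¬ (n.ml = true ∧ n.mr = true) → κ n.x ∉ Zc)

structure TailOK {V C : Type*} (κ : V → C) (Yc Zc : Set C) (E : V → V → Bool → Bool → Prop)
    (N : V → Prop) (S : Set V) (P : List (Nd V)) : Prop where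
  lst : ∃ t n, P = t ++ [n] ∧ κ n.x ∈ Yc
  chain : P.IsChain (LinkE E)
  mid : ∀ n ∈ P, MidN κ Zc N n
  nodup : P.Pairwise (fun a b => a.x ≠ b.x)
  inS : ∀ n ∈ P, n.x ∈ S

def PathOK {V C : Type*} (κ : V → C) (Xc Yc Zc : Set C) (E : V → V → Bool → Bool → Prop)
    (N : V → Prop) (S : Set V) (P : List (Nd V)) : Prop :=
  TailOK κ Yc Zc E N S P ∧ ∃ n t, P = n :: t ∧ κ n.x ∈ Xc

def Nd.swap {V : Type*} (n : Nd V) : Nd V := ⟨n.x, n.mr, n.ml⟩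

lemma PathOK.rev {V C : Type*} {κ : V → C} {Xc Yc Zc : Set C} {E : V → V → Bool → Bool → Prop}
    {N : V → Prop} {S : Set V} {P : List (Nd V)} (hE : ∀ a b ma mb, E a b ma mb → E b a mb ma)
    (h : PathOK κ Xc Yc Zc E N S P) : PathOK κ Yc Xc Zc E N S (P.reverse.map Nd.swap) := by
  obtain ⟨⟨⟨t, n, ht, hn⟩, h2, h3, h4, h5⟩, n', t', ht', hn'⟩ := h
  refine ⟨⟨⟨(t'.reverse.map Nd.swap), n'.swap, by simp [ht'], hn'⟩, ?_, ?_, ?_, ?_⟩,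
    n.swap, (t.reverse.map Nd.swap), by simp [ht], hn⟩
  · rw [List.isChain_map, List.isChain_reverse]
    exact h2.imp (fun a b hab => hE _ _ _ _ hab)
  · intro n hn
    simp only [List.mem_map, List.mem_reverse] at hn
    obtain ⟨m, hm, rfl⟩ := hn
    have := h3 m hm
    simpa [MidN, Nd.swap, and_comm] using this
  · rw [List.pairwise_map, List.pairwise_reverse]
    exact h4.imp (fun {a b} hab => fun h => hab h.symm)
  · intro n hn
    simp only [List.mem_map, List.mem_reverse] at hn
    obtain ⟨m, hm, rfl⟩ := hn
    exact h5 m hm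

lemma Edge.symm {V : Type*} {G : MixedGraph V} (a b : V) (ma mb : Bool) (h : Edge G a b ma mb) :
    Edge G b a mb ma := by
  have := G.bidir_symm
  cases ma <;> cases mb <;> simp only [Edge] at * <;> grind

section core

variable {V C : Type*} (κ : V → C) (Zc : Set C) (G : MixedGraph V) (τ : V → ℕ) (A : C) (S : Set V)

def sim (a b : V) : Prop := a = b ∨ (κ a = A ∧ κ b = A)

/-- The abstract context in which the new path is built. -/
structure Ctx (a1 a2 a3 : V) (D : ℕ) (T : V → ℕ) (NE : V → V → Bool → Bool → Prop) (N : V → Prop) :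
    Prop where
  hτ : ∀ a b, G.dir a b → τ a < τ b
  k1 : κ a1 = A
  k2 : κ a2 = A
  k3 : κ a3 = A
  n12 : a1 ≠ a2
  n13 : a1 ≠ a3
  n23 : a2 ≠ a3
  hT : ∀ v, κ v ≠ A → T v = τ v
  T1 : T a1 = 0
  T2 : T a2 = D
  hD : ∀ a, κ a = A → An κ Zc G a → τ a ≤ D
  lift : ∀ a b a' b' ma mb, Edge G a b ma mb → sim κ A a a' → sim κ A b b' →
    (a' ∈ S ∧ κ a' ≠ A ∨ a' = a1 ∨ a' = a2 ∨ a' = a3) →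
    (b' ∈ S ∧ κ b' ≠ A ∨ b' = a1 ∨ b' = a2 ∨ b' = a3) → a' ≠ b' →
    (ma = false → T a' < T b') → (mb = false → T b' < T a') → NE a' b' ma mb
  N1 : ∀ x, κ x ≠ A → An κ Zc G x → N x
  N2 : ∀ a, κ a = A → An κ Zc G a → N a2

variable {κ Zc G τ A S} {a1 a2 a3 : V} {D : ℕ} {T : V → ℕ} {NE : V → V → Bool → Bool → Prop}
  {N : V → Prop} {Yc Xc : Set C}

abbrev S3 (κ : V → C) (A : C) (S : Set V) (a1 a2 a3 : V) : Set V :=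
  {v | v ∈ S ∧ κ v ≠ A ∨ v = a1 ∨ v = a2 ∨ v = a3}

lemma TailOK.cons {E : V → V → Bool → Bool → Prop} {S' : Set V} {e n : Nd V} {σ : List (Nd V)}
    (h : TailOK κ Yc Zc E N S' (n :: σ)) (hl : E e.x n.x e.mr n.ml) (hm : MidN κ Zc N e)
    (hS : e.x ∈ S') (hd : ∀ m ∈ n :: σ, e.x ≠ m.x) : TailOK κ Yc Zc E N S' (e :: n :: σ) := by
  obtain ⟨⟨t, n', ht, hn⟩, h2, h3, h4, h5⟩ := h
  refine ⟨⟨e :: t, n', by simp [ht], hn⟩, List.isChain_cons_cons.2 ⟨hl, h2⟩, ?_,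
    List.pairwise_cons.2 ⟨hd, h4⟩, ?_⟩
  · intro m hm'
    rcases List.mem_cons.1 hm' with rfl | h
    exacts [hm, h3 _ h]
  · intro m hm'
    rcases List.mem_cons.1 hm' with rfl | h
    exacts [hS, h5 _ h]

/-- Appending a piece of the old path outside `A`. -/
lemma TailOK.app {e : Nd V} {σ : List (Nd V)}
    (c : Ctx κ Zc G τ A S a1 a2 a3 D T NE N)
    (h : TailOK κ Yc Zc NE N (S3 κ A S a1 a2 a3) (e :: σ)) : ∀ s : List (Nd V),
    (hs : s.IsChain (LinkE (Edge G))) → (hm : ∀ n ∈ s, MidN κ Zc (An κ Zc G) n) →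
    (hp : s.Pairwise (fun a b => a.x ≠ b.x)) → (hS : ∀ n ∈ s, n.x ∈ S) →
    (hA : ∀ n ∈ s, κ n.x ≠ A) → (hl : ∀ g s', s = s' ++ [g] → NE g.x e.x g.mr e.ml) →
    (hd : ∀ n ∈ s, ∀ m ∈ e :: σ, n.x ≠ m.x) →
    TailOK κ Yc Zc NE N (S3 κ A S a1 a2 a3) (s ++ e :: σ) := by
  intro s
  induction s with
  | nil => intros; simpa using h
  | cons n s ih =>
    intro hs hm hp hS hA hl hd
    have ih' := ih hs.tail (fun m hm' => hm m (by simp [hm'])) hp.tail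
      (fun m hm' => hS m (by simp [hm'])) (fun m hm' => hA m (by simp [hm']))
      (fun g s' hg => hl g (n :: s') (by simp [hg])) (fun m hm' => hd m (by simp [hm']))
    have hM : MidN κ Zc N n :=
      ⟨fun h => c.N1 _ (hA n (by simp)) ((hm n (by simp)).1 h), (hm n (by simp)).2⟩
    cases s with
    | nil =>
      exact TailOK.cons h (hl n [] (by simp)) hM (Or.inl ⟨hS n (by simp), hA n (by simp)⟩)
        (fun m hm' => hd n (by simp) m hm')
    | cons n2 s =>
      have hl2 : Edge G n.x n2.x n.mr n2.ml := (List.isChain_cons_cons.1 hs).1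
      refine TailOK.cons ih' ?_ hM (Or.inl ⟨hS n (by simp), hA n (by simp)⟩) ?_
      · have hn := hA n (by simp)
        have hn2 := hA n2 (by simp)
        refine c.lift n.x n2.x _ _ _ _ hl2 (Or.inl rfl) (Or.inl rfl) (Or.inl ⟨hS n (by simp), hn⟩)
          (Or.inl ⟨hS n2 (by simp), hn2⟩) ((List.pairwise_cons.1 hp).1 n2 (by simp)) ?_ ?_
        · intro h
          rw [c.hT _ hn, c.hT _ hn2]
          apply c.hτ
          cases h2 : n2.ml <;> simp_all [Edge]
        · intro h
          rw [c.hT _ hn, c.hT _ hn2]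
          apply c.hτ
          cases h2 : n.mr <;> simp_all [Edge]
      · intro m hm'
        have hm' : m ∈ (n2 :: s) ++ e :: σ := hm'
        rw [List.mem_append] at hm'
        rcases hm' with h | h
        · exact (List.pairwise_cons.1 hp).1 m h
        · exact hd n (by simp) m h

/-- A suffix of the old path outside `A`. -/
lemma TailOK.old (c : Ctx κ Zc G τ A S a1 a2 a3 D T NE N) {s : List (Nd V)}
    (h : TailOK κ Yc Zc (Edge G) (An κ Zc G) S s) (hA : ∀ n ∈ s, κ n.x ≠ A) :
    TailOK κ Yc Zc NE N (S3 κ A S a1 a2 a3) s := by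
  obtain ⟨⟨t, n, rfl, hn⟩, h2, h3, h4, h5⟩ := h
  have base : TailOK κ Yc Zc NE N (S3 κ A S a1 a2 a3) [n] := by
    refine ⟨⟨[], n, rfl, hn⟩, by simp, ?_, by simp, ?_⟩
    · intro m hm
      obtain rfl : m = n := by simpa using hm
      exact ⟨fun h => c.N1 _ (hA m (by simp)) ((h3 m (by simp)).1 h), (h3 m (by simp)).2⟩
    · intro m hm
      obtain rfl : m = n := by simpa using hm
      exact Or.inl ⟨h5 m (by simp), hA m (by simp)⟩
  rw [List.pairwise_append] at h4
  refine TailOK.app c base t h2.left_of_append (fun m hm => h3 m (by simp [hm])) h4.1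
    (fun m hm => h5 m (by simp [hm])) (fun m hm => hA m (by simp [hm])) ?_
    (fun a ha b hb => h4.2.2 a ha b hb)
  rintro g s' rfl
  have hl : Edge G g.x n.x g.mr n.ml := by
    rw [List.append_assoc] at h2
    exact (List.isChain_append_cons_cons.1 h2).2.1
  have hg := hA g (by simp)
  have hn2 := hA n (by simp)
  refine c.lift _ _ _ _ _ _ hl (Or.inl rfl) (Or.inl rfl) (Or.inl ⟨h5 g (by simp), hg⟩)
    (Or.inl ⟨h5 n (by simp), hn2⟩) (h4.2.2 g (by simp) n (by simp)) ?_ ?_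
  · intro h
    rw [c.hT _ hg, c.hT _ hn2]
    apply c.hτ
    cases h2 : n.ml <;> simp_all [Edge]
  · intro h
    rw [c.hT _ hg, c.hT _ hn2]
    apply c.hτ
    cases h2 : g.mr <;> simp_all [Edge]

/-- From a node with an arrowhead on its left, follow the path to the right. -/
lemma dirR (hτ : ∀ a b, G.dir a b → τ a < τ b) : ∀ (t : List (Nd V)) (n : Nd V),
    (n :: t).IsChain (LinkE (Edge G)) → (∀ m ∈ n :: t, MidN κ Zc (An κ Zc G) m) → n.ml = true →
    An κ Zc G n.x ∨ ∀ y ∈ n :: t, τ n.x ≤ τ y.x ∧ y.mr = false := by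
  intro t
  induction t with
  | nil =>
    intro n _ hm hl
    cases h : n.mr with
    | true => exact Or.inl ((hm n (by simp)).1 ⟨hl, h⟩)
    | false => right; simp [h]
  | cons b t ih =>
    intro n hc hm hl
    cases h : n.mr with
    | true => exact Or.inl ((hm n (by simp)).1 ⟨hl, h⟩)
    | false =>
      have hE : Edge G n.x b.x n.mr b.ml := (List.isChain_cons_cons.1 hc).1
      have hb : b.ml = true := by
        cases hb : b.ml <;> simp_all [Edge]
      have hd : G.dir n.x b.x := by
        rw [h, hb] at hE; exact hE.1
      rcases ih b hc.tail (fun m hm' => hm m (List.mem_cons_of_mem _ hm')) hb with ⟨z, hz, hz'⟩ | h2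
      · exact Or.inl ⟨z, hz, Relation.ReflTransGen.head hd hz'⟩
      · right
        intro y hy
        rcases List.mem_cons.1 hy with rfl | hy
        · exact ⟨le_rfl, h⟩
        · exact ⟨(hτ _ _ hd).le.trans (h2 y hy).1, (h2 y hy).2⟩

lemma dirL (hτ : ∀ a b, G.dir a b → τ a < τ b) (t : List (Nd V)) (n : Nd V)
    (hc : (t ++ [n]).IsChain (LinkE (Edge G)))
    (hm : ∀ m ∈ t ++ [n], MidN κ Zc (An κ Zc G) m) (hl : n.mr = true) :
    An κ Zc G n.x ∨ ∀ y ∈ t ++ [n], τ n.x ≤ τ y.x ∧ y.ml = false := by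
  have := dirR (κ := κ) (Zc := Zc) hτ (t.reverse.map Nd.swap) n.swap ?_ ?_ hl
  · rcases this with h | h
    · exact Or.inl h
    · right
      intro y hy
      exact h y.swap (by
        rw [List.mem_append] at hy
        rcases hy with hy | hy
        · exact List.mem_cons_of_mem _ (List.mem_map_of_mem (by simpa using hy))
        · simp at hy; simp [hy])
  · have e : n.swap :: (t.reverse.map Nd.swap) = (t ++ [n]).reverse.map Nd.swap := by simp
    rw [e, List.isChain_map, List.isChain_reverse]
    exact hc.imp (fun a b hab => Edge.symm _ _ _ _ hab)
  · have e : n.swap :: (t.reverse.map Nd.swap) = (t ++ [n]).reverse.map Nd.swap := by simp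
    rw [e]
    intro m hm'
    simp only [List.mem_map, List.mem_reverse] at hm'
    obtain ⟨m, hm', rfl⟩ := hm'
    simpa [MidN, Nd.swap, and_comm] using hm m hm'

/-- First element satisfying a predicate. -/
lemma split_first {α : Type*} (p : α → Prop) : ∀ l : List α, (∀ x ∈ l, ¬ p x) ∨
    ∃ s y r, l = s ++ y :: r ∧ p y ∧ ∀ x ∈ s, ¬ p x := by
  intro l
  induction l with
  | nil => simp
  | cons a l ih =>
    by_cases ha : p a
    · exact Or.inr ⟨[], a, l, rfl, ha, by simp⟩
    · rcases ih with h | ⟨s, y, r, rfl, hy, hs⟩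
      · left; simpa [ha] using h
      · right; exact ⟨a :: s, y, r, rfl, hy, by simpa [ha] using hs⟩

lemma split_last {α : Type*} (p : α → Prop) (l : List α) : (∀ x ∈ l, ¬ p x) ∨
    ∃ s y r, l = s ++ y :: r ∧ p y ∧ ∀ x ∈ r, ¬ p x := by
  rcases split_first p l.reverse with h | ⟨s, y, r, h, hy, hs⟩
  · left; simpa using h
  · right
    refine ⟨r.reverse, y, s.reverse, ?_, hy, by simpa using hs⟩
    have := congrArg List.reverse h
    simpa using this

/-- Last consecutive pair satisfying a relation. -/
lemma split_pair {α : Type*} (Q : α → α → Prop) : ∀ (t : List α) (a b : α), Q a b →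
    ∃ pre f x post, a :: b :: t = pre ++ f :: x :: post ∧ Q f x ∧
      (x :: post).IsChain (fun u v => ¬ Q u v) := by
  intro t
  induction t with
  | nil => intro a b h; exact ⟨[], a, b, [], rfl, h, by simp⟩
  | cons c t ih =>
    intro a b h
    by_cases hq : (b :: c :: t).IsChain (fun u v => ¬ Q u v)
    · exact ⟨[], a, b, c :: t, rfl, h, hq⟩
    · have : ∃ pre f x post, b :: c :: t = pre ++ f :: x :: post ∧ Q f x ∧
          (x :: post).IsChain (fun u v => ¬ Q u v) := by
        clear h ih
        generalize b :: c :: t = l at hq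
        induction l with
        | nil => simp at hq
        | cons d l ih =>
          by_cases hl : l.IsChain (fun u v => ¬ Q u v)
          · cases l with
            | nil => simp at hq
            | cons e l =>
              rw [List.isChain_cons_cons] at hq
              exact ⟨[], d, e, l, rfl, by tauto, hl⟩
          · obtain ⟨pre, f, x, post, h1, h2, h3⟩ := ih hl
            exact ⟨d :: pre, f, x, post, by simp [h1], h2, h3⟩
      obtain ⟨pre, f, x, post, h1, h2, h3⟩ := this
      exact ⟨a :: pre, f, x, post, by simp [h1], h2, h3⟩


lemma Edge.l {a b : V} {ma mb : Bool} (h : Edge G a b ma mb) (hm : ma = false) :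
    G.dir a b ∧ mb = true := by
  cases mb <;> simp_all [Edge]

lemma Edge.r {a b : V} {ma mb : Bool} (h : Edge G a b ma mb) (hm : mb = false) :
    G.dir b a ∧ ma = true := by
  cases ma <;> simp_all [Edge]

lemma Ctx.linkR (c : Ctx κ Zc G τ A S a1 a2 a3 D T NE N) {B u q : V} {ma mb : Bool}
    (h : Edge G B u ma mb) (hB : κ B ≠ A) (hS : B ∈ S) (hu : κ u = A)
    (hq : q = a1 ∨ q = a2 ∨ q = a3) (h1 : ma = false → τ B < T q) (h2 : mb = false → T q < τ B) :
    NE B q ma mb := by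
  have hqA : κ q = A := by
    rcases hq with rfl | rfl | rfl
    exacts [c.k1, c.k2, c.k3]
  refine c.lift B u B q ma mb h (Or.inl rfl) (Or.inr ⟨hu, hqA⟩) (Or.inl ⟨hS, hB⟩) (Or.inr hq) ?_ ?_ ?_
  · rintro rfl; exact hB hqA
  · rwa [c.hT _ hB]
  · rwa [c.hT _ hB]

lemma Ctx.linkL (c : Ctx κ Zc G τ A S a1 a2 a3 D T NE N) {E v q : V} {ma mb : Bool}
    (h : Edge G v E ma mb) (hB : κ E ≠ A) (hS : E ∈ S) (hu : κ v = A)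
    (hq : q = a1 ∨ q = a2 ∨ q = a3) (h1 : ma = false → T q < τ E) (h2 : mb = false → τ E < T q) :
    NE q E ma mb := by
  have hqA : κ q = A := by
    rcases hq with rfl | rfl | rfl
    exacts [c.k1, c.k2, c.k3]
  refine c.lift v E q E ma mb h (Or.inr ⟨hu, hqA⟩) (Or.inl rfl) (Or.inr hq) (Or.inl ⟨hS, hB⟩) ?_ ?_ ?_
  · rintro rfl; exact hB hqA
  · rwa [c.hT _ hB]
  · rwa [c.hT _ hB]

lemma TailOK.suffix {E : V → V → Bool → Bool → Prop} {s P : List (Nd V)}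
    (h : TailOK κ Yc Zc E N S P) (hs : s <:+ P) (hne : s ≠ []) : TailOK κ Yc Zc E N S s := by
  obtain ⟨⟨t, n, rfl, hn⟩, h2, h3, h4, h5⟩ := h
  have hsub := hs.subset
  have hch := h2.suffix hs
  have hpw := h4.sublist hs.sublist
  rcases List.eq_nil_or_concat s with rfl | ⟨s', b, rfl⟩
  · exact absurd rfl hne
  · rw [List.concat_eq_append] at *
    obtain ⟨r, hr⟩ := hs
    have hb : b = n := by
      have := congrArg List.getLast? hr
      simpa using this
    exact ⟨⟨s', b, rfl, hb ▸ hn⟩, hch, fun m hm => h3 m (hsub hm), hpw,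
      fun m hm => h5 m (hsub hm)⟩

/-- Attach the initial piece of the old path. -/
lemma finish (c : Ctx κ Zc G τ A S a1 a2 a3 D T NE N) {L1 M : List (Nd V)} {nB nu e : Nd V}
    {σ : List (Nd V)} (h : PathOK κ Xc Yc Zc (Edge G) (An κ Zc G) S (L1 ++ nB :: nu :: M))
    (hL : ∀ n ∈ L1, κ n.x ≠ A) (hB : κ nB.x ≠ A) (hu : κ nu.x = A)
    (ht : TailOK κ Yc Zc NE N (S3 κ A S a1 a2 a3) (e :: σ))
    (he : e.x = a1 ∨ e.x = a2 ∨ e.x = a3) (hml : e.ml = nu.ml)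
    (h1 : nB.mr = false → τ nB.x < T e.x) (h2 : nu.ml = false → T e.x < τ nB.x)
    (hd : ∀ n ∈ σ, κ n.x = A ∨ ∃ m ∈ M, n.x = m.x) :
    PathOK κ Xc Yc Zc NE N (S3 κ A S a1 a2 a3) ((L1 ++ [nB]) ++ e :: σ) := by
  obtain ⟨⟨_, hc, hm, hp, hS⟩, n, t, hnt, hn⟩ := h
  have hA : ∀ n ∈ L1 ++ [nB], κ n.x ≠ A := by
    intro n hn
    rcases List.mem_append.1 hn with h | h
    · exact hL n h
    · obtain rfl : n = nB := by simpa using h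
      exact hB
  have hlink := (List.isChain_append_cons_cons.1 hc)
  have hl2 : Edge G nB.x nu.x nB.mr nu.ml := hlink.2.1
  have hp' : ((L1 ++ [nB]) ++ nu :: M).Pairwise (fun a b => a.x ≠ b.x) := by simpa using hp
  rw [List.pairwise_append] at hp'
  have hmem : ∀ n ∈ L1 ++ [nB], n ∈ L1 ++ nB :: nu :: M := by
    intro n hn; simp at hn ⊢; tauto
  have heA : κ e.x = A := by
    rcases he with h | h | h <;> rw [h]
    exacts [c.k1, c.k2, c.k3]
  refine ⟨TailOK.app c ht (L1 ++ [nB]) hlink.1 (fun n hn => hm n (hmem n hn)) hp'.1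
    (fun n hn => hS n (hmem n hn)) hA ?_ ?_, ?_⟩
  · intro g s' hg
    obtain ⟨-, rfl⟩ : L1 = s' ∧ nB = g := by simpa using hg
    rw [hml]
    exact c.linkR hl2 hB (hS nB (by simp)) hu he h1 h2
  · intro n hn m hm' heq
    have hnA := hA n hn
    rw [heq] at hnA
    rcases List.mem_cons.1 hm' with rfl | hm'
    · exact hnA heA
    · rcases hd m hm' with h | ⟨m', hm'', h⟩
      · exact hnA h
      · exact hp'.2.2 n hn m' (by simp [hm'']) (heq.trans h)
  · cases L1 with
    | nil =>
      simp only [List.nil_append, List.cons.injEq] at hnt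
      exact ⟨nB, e :: σ, by simp, hnt.1 ▸ hn⟩
    | cons a L1 =>
      simp only [List.cons_append, List.cons.injEq] at hnt
      exact ⟨a, L1 ++ nB :: e :: σ, by simp, hnt.1 ▸ hn⟩

/-- Merge all visits of `A` into a single one. -/
lemma merge (c : Ctx κ Zc G τ A S a1 a2 a3 D T NE N) {L1 M mid L2 : List (Nd V)} {nB nu nv nE : Nd V}
    {q : V} (h : PathOK κ Xc Yc Zc (Edge G) (An κ Zc G) S (L1 ++ nB :: nu :: M))
    (hL : ∀ n ∈ L1, κ n.x ≠ A) (hB : κ nB.x ≠ A) (hu : κ nu.x = A)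
    (hM : nu :: M = mid ++ nv :: nE :: L2) (hv : κ nv.x = A) (hE : ∀ n ∈ nE :: L2, κ n.x ≠ A)
    (hq : q = a1 ∨ q = a2 ∨ q = a3)
    (h1 : nB.mr = false → τ nB.x < T q) (h2 : nu.ml = false → T q < τ nB.x)
    (h3 : nv.mr = false → T q < τ nE.x) (h4 : nE.ml = false → τ nE.x < T q)
    (hmid : MidN κ Zc N ⟨q, nu.ml, nv.mr⟩) :
    ∃ P', PathOK κ Xc Yc Zc NE N (S3 κ A S a1 a2 a3) P' := by
  have hqA : κ q = A := by
    rcases hq with rfl | rfl | rfl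
    exacts [c.k1, c.k2, c.k3]
  have hsuf : nE :: L2 <:+ L1 ++ nB :: nu :: M := ⟨L1 ++ nB :: mid ++ [nv], by simp [hM]⟩
  have hT := TailOK.old c (h.1.suffix hsuf (by simp)) hE
  have hEv : Edge G nv.x nE.x nv.mr nE.ml := by
    have := h.1.chain
    rw [hM, show L1 ++ nB :: (mid ++ nv :: nE :: L2) = (L1 ++ nB :: mid) ++ nv :: nE :: L2 by simp,
      List.isChain_append_cons_cons] at this
    exact this.2.1
  have hT2 : TailOK κ Yc Zc NE N (S3 κ A S a1 a2 a3) (⟨q, nu.ml, nv.mr⟩ :: nE :: L2) := by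
    refine hT.cons ?_ hmid (Or.inr hq) ?_
    · exact c.linkL hEv (hE nE (by simp)) (h.1.inS nE (hsuf.subset (by simp))) hv hq h3 h4
    · rintro m hm rfl
      exact hE m hm hqA
  refine ⟨_, finish c h hL hB hu hT2 hq rfl h1 h2 ?_⟩
  intro n hn
  right
  have : n ∈ nu :: M := by rw [hM]; simp at hn ⊢; tauto
  rcases List.mem_cons.1 this with rfl | h
  · exact absurd hu (hE n hn)
  · exact ⟨n, h, rfl⟩

lemma tailSig (c : Ctx κ Zc G τ A S a1 a2 a3 D T NE N) {post w0 L2 : List (Nd V)} {x nv nE : Nd V}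
    (h : TailOK κ Yc Zc (Edge G) (An κ Zc G) S (x :: post)) (hx : κ x.x = A)
    (hQ : (x :: post).IsChain (fun u v => ¬ (κ v.x = A ∧ u.mr = false)))
    (hw : x :: post = w0 ++ nv :: nE :: L2) (hv : κ nv.x = A) (hE : ∀ n ∈ nE :: L2, κ n.x ≠ A)
    (hvr : nv.mr = false) :
    ∃ n' σ', TailOK κ Yc Zc NE N (S3 κ A S a1 a2 a3) (n' :: σ') ∧
      (∀ n ∈ n' :: σ', n.x = a1 ∨ (n ∈ post ∧ κ n.x ≠ A)) ∧
      ∀ q, (q = a2 ∨ q = a3) → (x.mr = false → T q ≤ τ x.x) → (x.mr = true → τ x.x ≤ T q) →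
        NE q n'.x x.mr n'.ml := by
  have hsuf : nE :: L2 <:+ x :: post := ⟨w0 ++ [nv], by simp [hw]⟩
  have hTE := TailOK.old c (h.suffix hsuf (by simp)) hE
  have hEv : Edge G nv.x nE.x nv.mr nE.ml := by
    have := h.chain
    rw [hw, List.isChain_append_cons_cons] at this
    exact this.2.1
  have hdE := hEv.l hvr
  have hSE : nE.x ∈ S := h.inS nE (hsuf.subset (by simp))
  cases w0 with
  | nil =>
    simp only [List.nil_append, List.cons.injEq] at hw
    obtain ⟨rfl, rfl⟩ := hw
    refine ⟨nE, L2, hTE, fun n hn => Or.inr ⟨hn, hE n hn⟩, ?_⟩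
    intro q hq h1 h2
    refine c.linkL hEv (hE nE (by simp)) hSE hv (Or.inr hq)
      (fun hf => (h1 hf).trans_lt (c.hτ _ _ hdE.1)) (fun hf => ?_)
    rw [hdE.2] at hf; simp at hf
  | cons x' w1 =>
    simp only [List.cons_append, List.cons.injEq] at hw
    obtain ⟨rfl, hpost⟩ := hw
    obtain ⟨s, y, r, hs, hy, hsA⟩ : ∃ s y r, w1 ++ [nv] = s ++ y :: r ∧ κ y.x = A ∧
        ∀ n ∈ s, ¬ κ n.x = A := by
      rcases split_first (fun n : Nd V => κ n.x = A) (w1 ++ [nv]) with h | h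
      · exact absurd hv (h nv (by simp))
      · exact h
    have hpost2 : post = s ++ y :: (r ++ nE :: L2) := by
      rw [hpost, show w1 ++ nv :: nE :: L2 = (w1 ++ [nv]) ++ nE :: L2 by simp, hs]; simp
    have hvmem : nv ∈ x :: post := by rw [hpost]; simp
    have hZ : A ∉ Zc := by
      have := (h.mid nv hvmem).2 (by simp [hvr])
      rwa [hv] at this
    have hT1 : TailOK κ Yc Zc NE N (S3 κ A S a1 a2 a3) (⟨a1, y.ml, false⟩ :: nE :: L2) := by
      refine hTE.cons ?_ ⟨by simp, fun _ => by simpa [c.k1] using hZ⟩ (Or.inr (Or.inl rfl)) ?_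
      · have := c.linkL (q := a1) hEv (hE nE (by simp)) hSE hv (Or.inl rfl)
          (fun hf => by rw [c.T1]; exact (Nat.zero_le _).trans_lt (c.hτ _ _ hdE.1)) (fun hf => by
            rw [hdE.2] at hf; simp at hf)
        rwa [hvr] at this
      · rintro m hm rfl
        exact hE m hm c.k1
    have hch := h.chain
    have hQ' := hQ
    have hpw := h.nodup
    rw [hpost2] at hch hQ' hpw
    have hmem : ∀ n ∈ s, n ∈ x :: post := by intro n hn; rw [hpost2]; simp [hn]
    have hE2 : ∀ n ∈ nE :: L2, n ∈ post := by intro n hn; rw [hpost]; simp at hn ⊢; tauto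
    have hT2 : TailOK κ Yc Zc NE N (S3 κ A S a1 a2 a3) (s ++ ⟨a1, y.ml, false⟩ :: nE :: L2) := by
      refine TailOK.app c hT1 s hch.tail.left_of_append (fun n hn => h.mid n (hmem n hn)) ?_
        (fun n hn => h.inS n (hmem n hn)) hsA ?_ ?_
      · exact (List.pairwise_append.1 hpw.tail).1
      · rintro g s' rfl
        have e : x :: (s' ++ [g] ++ y :: (r ++ nE :: L2)) = (x :: s') ++ g :: y :: (r ++ nE :: L2) := by
          simp
        rw [e, List.isChain_append_cons_cons] at hch hQ'
        have hgy : Edge G g.x y.x g.mr y.ml := hch.2.1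
        refine c.linkR hgy (hsA g (by simp)) (h.inS g (hmem g (by simp))) hy (Or.inl rfl) ?_ ?_
        · intro hf
          exact absurd ⟨hy, hf⟩ hQ'.2.1
        · intro hf
          rw [c.T1]
          exact (Nat.zero_le _).trans_lt (c.hτ _ _ (hgy.r hf).1)
      · intro n hn m hm
        rcases List.mem_cons.1 hm with rfl | hm
        · intro hh
          have := hsA n hn
          rw [hh] at this
          exact this c.k1
        · exact (List.pairwise_append.1 hpw.tail).2.2 n hn m (by simp at hm ⊢; tauto)
    have hcond : ∀ n ∈ s ++ ⟨a1, y.ml, false⟩ :: nE :: L2, n.x = a1 ∨ (n ∈ post ∧ κ n.x ≠ A) := by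
      intro n hn
      rcases List.mem_append.1 hn with hn | hn
      · exact Or.inr ⟨by rw [hpost2]; simp [hn], hsA n hn⟩
      · rcases List.mem_cons.1 hn with rfl | hn
        · exact Or.inl rfl
        · exact Or.inr ⟨hE2 n hn, hE n hn⟩
    cases s with
    | nil =>
      refine ⟨_, _, hT2, hcond, ?_⟩
      intro q hq h1 h2
      have hxy : Edge G x.x y.x x.mr y.ml := (List.isChain_cons_cons.1 hch).1
      have hxr : ¬ (κ y.x = A ∧ x.mr = false) := (List.isChain_cons_cons.1 hQ').1
      have hxr' : x.mr = true := by simpa [hy] using hxr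
      have hqA : κ q = A := by
        rcases hq with rfl | rfl
        exacts [c.k2, c.k3]
      refine c.lift x.x y.x _ _ _ _ hxy (Or.inr ⟨hx, hqA⟩) (Or.inr ⟨hy, c.k1⟩) (Or.inr (Or.inr hq))
        (Or.inr (Or.inl rfl)) ?_ ?_ ?_
      · rcases hq with rfl | rfl
        exacts [c.n12.symm, c.n13.symm]
      · intro hf; rw [hxr'] at hf; simp at hf
      · intro hf
        have := c.hτ _ _ (hxy.r hf).1
        have := h2 hxr'
        simp only [c.T1]
        omega
    | cons n' s' =>
      refine ⟨_, _, hT2, hcond, ?_⟩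
      intro q hq h1 h2
      have hxy : Edge G x.x n'.x x.mr n'.ml := (List.isChain_cons_cons.1 hch).1
      refine c.linkL hxy (hsA n' (by simp)) (h.inS n' (hmem n' (by simp))) hx (Or.inr hq) ?_ ?_
      · intro hf
        exact (h1 hf).trans_lt (c.hτ _ _ (hxy.l hf).1)
      · intro hf
        exact (c.hτ _ _ (hxy.r hf).1).trans_le (h2 (hxy.r hf).2)

lemma pcase {T : ℕ → V → ℕ} {NE : ℕ → V → V → Bool → Bool → Prop} {N : ℕ → V → Prop}
    (c : ∀ θ, Ctx κ Zc G τ A S a1 a2 a3 D (T θ) (NE θ) (N θ)) (hT3 : ∀ θ, T θ a3 = θ)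
    {L1 M mid L2 : List (Nd V)} {nB nu nv nE : Nd V}
    (h : PathOK κ Xc Yc Zc (Edge G) (An κ Zc G) S (L1 ++ nB :: nu :: M))
    (hL : ∀ n ∈ L1, κ n.x ≠ A) (hB : κ nB.x ≠ A) (hu : κ nu.x = A)
    (hM : nu :: M = mid ++ nv :: nE :: L2) (hv : κ nv.x = A) (hE : ∀ n ∈ nE :: L2, κ n.x ≠ A)
    (hBr : nB.mr = false) (hvr : nv.mr = false) (hlt : τ nv.x ≤ τ nB.x) :
    ∃ θ P', PathOK κ Xc Yc Zc (NE θ) (N θ) (S3 κ A S a1 a2 a3) P' := by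
  have hτ := (c 0).hτ
  have hch := List.isChain_append_cons_cons.1 h.1.chain
  have hBu : Edge G nB.x nu.x nB.mr nu.ml := hch.2.1
  have hBu' := hBu.l hBr
  have hBu'' := hτ _ _ hBu'.1
  have hvM : nv ∈ nu :: M := by rw [hM]; simp
  have hZ : A ∉ Zc := by
    have := (h.1.mid nv (by simp at hvM ⊢; tauto)).2 (by simp [hvr])
    rwa [hv] at this
  have huAn : An κ Zc G nu.x := by
    rcases dirR (κ := κ) (Zc := Zc) hτ M nu hch.2.2
      (fun m hm => h.1.mid m (by simp at hm ⊢; tauto)) hBu'.2 with h | h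
    · exact h
    · have := (h nv hvM).1
      omega
  have huD := (c 0).hD _ hu huAn
  obtain ⟨pre, f, x, post, hdec, ⟨hx, hfr⟩, hQ⟩ :=
    split_pair (fun u v : Nd V => κ v.x = A ∧ u.mr = false) M nB nu ⟨hu, hBr⟩
  have hP : L1 ++ nB :: nu :: M = (L1 ++ pre) ++ f :: x :: post := by rw [hdec]; simp
  have hsufx : x :: post <:+ L1 ++ nB :: nu :: M := ⟨L1 ++ pre ++ [f], by rw [hP]; simp⟩
  have hsufv : nv :: nE :: L2 <:+ L1 ++ nB :: nu :: M := ⟨L1 ++ nB :: mid, by rw [hM]; simp⟩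
  obtain ⟨w0, hw0⟩ : nv :: nE :: L2 <:+ x :: post := by
    rcases List.suffix_or_suffix_of_suffix hsufx hsufv with h | h
    · obtain ⟨w, hw⟩ := h
      cases w with
      | nil => exact ⟨[], by simpa using hw.symm⟩
      | cons a w =>
        simp only [List.cons_append, List.cons.injEq] at hw
        exact absurd hx (hE x (by rw [← hw.2]; simp))
    · exact h
  have hTx := h.1.suffix hsufx (by simp)
  have hchx := h.1.chain
  have hpw := h.1.nodup
  rw [hP] at hchx hpw
  have hfx : Edge G f.x x.x f.mr x.ml := (List.isChain_append_cons_cons.1 hchx).2.1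
  have hfx' := hfx.l hfr
  have hfx'' := hτ _ _ hfx'.1
  have hxD : τ x.x ≤ D := by
    rcases dirR (κ := κ) (Zc := Zc) hτ post x hTx.chain hTx.mid hfx'.2 with h | h
    · exact (c 0).hD _ hx h
    · have := (h nv (by rw [← hw0]; simp)).1
      omega
  have hfP : f ∈ L1 ++ nB :: nu :: M := by rw [hP]; simp
  have hfZ : κ f.x ∉ Zc := (h.1.mid f hfP).2 (by simp [hfr])
  have hfS : f.x ∈ S := h.1.inS f hfP
  have hpM : ∀ n ∈ post, n ∈ M := by
    intro n hn
    cases pre with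
    | nil => simp at hdec; rw [hdec.2.2]; exact hn
    | cons b pre =>
      simp only [List.cons_append, List.cons.injEq] at hdec
      cases pre with
      | nil => simp at hdec; rw [hdec.2.2]; simp [hn]
      | cons b' pre => simp at hdec; rw [hdec.2.2]; simp [hn]
  have hmid2 : ∀ θ, MidN κ Zc (N θ) ⟨a2, true, true⟩ := fun θ =>
    ⟨fun _ => (c θ).N2 _ hu huAn, by simp⟩
  have hmid3 : ∀ θ b, MidN κ Zc (N θ) ⟨a3, b, false⟩ := fun θ b =>
    ⟨by simp, fun _ => by simpa [(c θ).k3] using hZ⟩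
  cases hxr : x.mr with
  | true =>
    obtain ⟨n', σ', hσ, hσ2, hσ3⟩ := tailSig (c 0) hTx hx hQ hw0.symm hv hE hvr
    have hT2 : TailOK κ Yc Zc (NE 0) (N 0) (S3 κ A S a1 a2 a3) (⟨a2, true, true⟩ :: n' :: σ') := by
      refine hσ.cons ?_ (hmid2 0) (by simp) ?_
      · have := hσ3 a2 (Or.inl rfl) (by simp [hxr]) (by simp [(c 0).T2, hxD])
        rwa [hxr] at this
      · rintro m hm heq
        simp only at heq
        rcases hσ2 m hm with h | h
        · exact (c 0).n12 (h.symm.trans heq.symm)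
        · rw [← heq] at h; exact h.2 (c 0).k2
    refine ⟨0, _, finish (c 0) h hL hB hu hT2 (Or.inr (Or.inl rfl)) hBu'.2.symm ?_ ?_ ?_⟩
    · intro _; simp only [(c 0).T2]; omega
    · intro hf; rw [hBu'.2] at hf; simp at hf
    · intro n hn
      rcases hσ2 n hn with h | h
      · left; rw [h]; exact (c 0).k1
      · exact Or.inr ⟨n, hpM n h.1, rfl⟩
  | false =>
    have key : ∀ θ b, θ ≤ τ x.x → ∃ n' σ',
        TailOK κ Yc Zc (NE θ) (N θ) (S3 κ A S a1 a2 a3) (⟨a3, b, false⟩ :: n' :: σ') ∧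
        (∀ n ∈ n' :: σ', n.x = a1 ∨ (n ∈ post ∧ κ n.x ≠ A)) := by
      intro θ b hθ
      obtain ⟨n', σ', hσ, hσ2, hσ3⟩ := tailSig (c θ) hTx hx hQ hw0.symm hv hE hvr
      refine ⟨n', σ', ?_, hσ2⟩
      refine hσ.cons ?_ (hmid3 θ b) (by simp) ?_
      · have := hσ3 a3 (Or.inr rfl) (by simp [hT3, hθ]) (by simp [hxr])
        rwa [hxr] at this
      · rintro m hm heq
        simp only at heq
        rcases hσ2 m hm with h | h
        · exact (c 0).n13 (h.symm.trans heq.symm)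
        · rw [← heq] at h; exact h.2 (c 0).k3
    cases pre with
    | nil =>
      simp only [List.nil_append, List.cons.injEq] at hdec
      obtain ⟨rfl, rfl, rfl⟩ := hdec
      obtain ⟨n', σ', hσ, hσ2⟩ := key (τ nu.x) true le_rfl
      refine ⟨τ nu.x, _, finish (c _) h hL hB hu hσ (Or.inr (Or.inr rfl)) hBu'.2.symm ?_ ?_ ?_⟩
      · intro _; simp only [hT3]; omega
      · intro hf; rw [hBu'.2] at hf; simp at hf
      · intro n hn
        rcases hσ2 n hn with h | h
        · left; rw [h]; exact (c 0).k1
        · exact Or.inr ⟨n, hpM n h.1, rfl⟩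
    | cons b pre =>
      simp only [List.cons_append, List.cons.injEq] at hdec
      obtain ⟨rfl, hdec⟩ := hdec
      by_cases hfA : κ f.x = A
      · obtain ⟨n', σ', hσ, hσ2⟩ := key (τ f.x) false hfx''.le
        have hT2 : TailOK κ Yc Zc (NE (τ f.x)) (N (τ f.x)) (S3 κ A S a1 a2 a3)
            (⟨a2, true, true⟩ :: ⟨a3, false, false⟩ :: n' :: σ') := by
          refine hσ.cons ?_ (hmid2 _) (by simp) ?_
          · have hE' : Edge G x.x f.x true false := by
              have := Edge.symm _ _ _ _ hfx
              rwa [hfr, hfx'.2] at this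
            refine (c _).lift x.x f.x a2 a3 _ _ hE' (Or.inr ⟨hx, (c 0).k2⟩) (Or.inr ⟨hfA, (c 0).k3⟩)
              (by simp) (by simp) (c 0).n23 (by simp) ?_
            intro _
            rw [hT3, (c _).T2]; omega
          · rintro m hm heq
            simp only at heq
            rcases List.mem_cons.1 hm with rfl | hm
            · exact (c 0).n23 heq
            · rcases hσ2 m hm with h | h
              · exact (c 0).n12 (h.symm.trans heq.symm)
              · rw [← heq] at h; exact h.2 (c 0).k2
        refine ⟨_, _, finish (c _) h hL hB hu hT2 (Or.inr (Or.inl rfl)) hBu'.2.symm ?_ ?_ ?_⟩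
        · intro _; simp only [(c _).T2]; omega
        · intro hf; rw [hBu'.2] at hf; simp at hf
        · intro n hn
          rcases List.mem_cons.1 hn with rfl | hn
          · left; exact (c 0).k3
          rcases hσ2 n hn with h | h
          · left; rw [h]; exact (c 0).k1
          · exact Or.inr ⟨n, hpM n h.1, rfl⟩
      · obtain ⟨n', σ', hσ, hσ2⟩ := key (τ x.x) true le_rfl
        have hfM : f ∈ M := by
          have : f ∈ nu :: M := by rw [hdec]; simp
          rcases List.mem_cons.1 this with rfl | h
          · exact absurd hu hfA
          · exact h
        have hT2 : TailOK κ Yc Zc (NE (τ x.x)) (N (τ x.x)) (S3 κ A S a1 a2 a3)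
            (⟨f.x, false, false⟩ :: ⟨a3, true, false⟩ :: n' :: σ') := by
          refine hσ.cons ?_ ⟨by simp, fun _ => hfZ⟩ (Or.inl ⟨hfS, hfA⟩) ?_
          · rw [hfr, hfx'.2] at hfx
            exact (c _).linkR hfx hfA hfS hx (by simp) (by simp [hT3, hfx'']) (by simp)
          · rintro m hm heq
            simp only at heq
            rcases List.mem_cons.1 hm with rfl | hm
            · rw [heq] at hfA; exact hfA (c 0).k3
            · rcases hσ2 m hm with h | h
              · rw [heq, h] at hfA; exact hfA (c 0).k1
              · have := (List.pairwise_append.1 hpw).2.1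
                exact (List.pairwise_cons.1 this).1 m (by simp [h.1]) heq
        have hT3' : TailOK κ Yc Zc (NE (τ x.x)) (N (τ x.x)) (S3 κ A S a1 a2 a3)
            (⟨a2, true, true⟩ :: ⟨f.x, false, false⟩ :: ⟨a3, true, false⟩ :: n' :: σ') := by
          refine hT2.cons ?_ (hmid2 _) (by simp) ?_
          · have hE' : Edge G x.x f.x true false := by
              have := Edge.symm _ _ _ _ hfx
              rwa [hfr, hfx'.2] at this
            refine (c _).linkL hE' hfA hfS hx (by simp) (by simp) ?_
            intro _
            rw [(c _).T2]
            change τ f.x < D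
            omega
          · rintro m hm heq
            simp only at heq
            rcases List.mem_cons.1 hm with rfl | hm
            · simp only at heq; rw [← heq] at hfA; exact hfA (c 0).k2
            rcases List.mem_cons.1 hm with rfl | hm
            · exact (c 0).n23 heq
            · rcases hσ2 m hm with h | h
              · exact (c 0).n12 (h.symm.trans heq.symm)
              · rw [← heq] at h; exact h.2 (c 0).k2
        refine ⟨_, _, finish (c _) h hL hB hu hT3' (Or.inr (Or.inl rfl)) hBu'.2.symm ?_ ?_ ?_⟩
        · intro _; simp only [(c _).T2]; omega
        · intro hf; rw [hBu'.2] at hf; simp at hf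
        · intro n hn
          rcases List.mem_cons.1 hn with rfl | hn
          · exact Or.inr ⟨f, hfM, rfl⟩
          rcases List.mem_cons.1 hn with rfl | hn
          · left; exact (c 0).k3
          rcases hσ2 n hn with h | h
          · left; rw [h]; exact (c 0).k1
          · exact Or.inr ⟨n, hpM n h.1, rfl⟩


lemma interiorTF {T : ℕ → V → ℕ} {NE : ℕ → V → V → Bool → Bool → Prop} {N : ℕ → V → Prop}
    (c : ∀ θ, Ctx κ Zc G τ A S a1 a2 a3 D (T θ) (NE θ) (N θ)) (hT3 : ∀ θ, T θ a3 = θ)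
    {L1 M mid L2 : List (Nd V)} {nB nu nv nE : Nd V}
    (h : PathOK κ Xc Yc Zc (Edge G) (An κ Zc G) S (L1 ++ nB :: nu :: M))
    (hL : ∀ n ∈ L1, κ n.x ≠ A) (hB : κ nB.x ≠ A) (hu : κ nu.x = A)
    (hM : nu :: M = mid ++ nv :: nE :: L2) (hv : κ nv.x = A) (hE : ∀ n ∈ nE :: L2, κ n.x ≠ A)
    (hul : nu.ml = true) (hvr : nv.mr = false) :
    ∃ θ P', PathOK κ Xc Yc Zc (NE θ) (N θ) (S3 κ A S a1 a2 a3) P' := by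
  by_cases hc : nB.mr = false ∧ τ nv.x ≤ τ nB.x
  · exact pcase c hT3 h hL hB hu hM hv hE hc.1 hvr hc.2
  · have hτ := (c 0).hτ
    have hvM : nv ∈ nu :: M := by rw [hM]; simp
    have hZ : A ∉ Zc := by
      have := (h.1.mid nv (by simp at hvM ⊢; tauto)).2 (by simp [hvr])
      rwa [hv] at this
    have hEv : Edge G nv.x nE.x nv.mr nE.ml := by
      have := h.1.chain
      rw [hM, show L1 ++ nB :: (mid ++ nv :: nE :: L2) = (L1 ++ nB :: mid) ++ nv :: nE :: L2 by simp,
        List.isChain_append_cons_cons] at this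
      exact this.2.1
    have hE' := hEv.l hvr
    refine ⟨τ nv.x, merge (c _) (q := a3) h hL hB hu hM hv hE (by simp) ?_ ?_ ?_ ?_ ?_⟩
    · intro hf
      rw [hT3]
      by_contra hh
      exact hc ⟨hf, by omega⟩
    · intro hf; rw [hul] at hf; simp at hf
    · intro _; rw [hT3]; exact hτ _ _ hE'.1
    · intro hf; rw [hE'.2] at hf; simp at hf
    · exact ⟨by simp [hvr], fun _ => by simpa [(c 0).k3] using hZ⟩

/-- Decomposition of a path visiting `A` in its interior. -/
lemma decomp {P : List (Nd V)} {E : V → V → Bool → Bool → Prop}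
    (h : PathOK κ Xc Yc Zc E N S P) (hX : A ∉ Xc) (hY : A ∉ Yc) (hA : ¬ ∀ n ∈ P, κ n.x ≠ A) :
    ∃ (L1 M mid L2 : List (Nd V)) (nB nu nv nE : Nd V), P = L1 ++ nB :: nu :: M ∧
      (∀ n ∈ L1, κ n.x ≠ A) ∧ κ nB.x ≠ A ∧ κ nu.x = A ∧ nu :: M = mid ++ nv :: nE :: L2 ∧
      κ nv.x = A ∧ ∀ n ∈ nE :: L2, κ n.x ≠ A := by
  obtain ⟨⟨⟨t, nl, hl, hlY⟩, -⟩, nh, t', hh, hhX⟩ := h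
  rcases split_first (fun n : Nd V => κ n.x = A) P with h | ⟨s, nu, M, hs, hu, hsA⟩
  · exact absurd h hA
  rcases split_last (fun n : Nd V => κ n.x = A) (nu :: M) with h | ⟨mid, nv, r, hM, hv, hrA⟩
  · exact absurd hu (h nu (by simp))
  rcases List.eq_nil_or_concat s with rfl | ⟨L1, nB, rfl⟩
  · rw [hh] at hs
    simp at hs
    rw [hs.1, hu] at hhX
    exact absurd hhX hX
  cases r with
  | nil =>
    rw [hl, hM] at hs
    rw [← List.append_assoc] at hs
    have := (List.append_singleton_inj.1 hs).2
    rw [this, hv] at hlY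
    exact absurd hlY hY
  | cons nE L2 =>
    rw [List.concat_eq_append] at *
    exact ⟨L1, M, mid, L2, nB, nu, nv, nE, by simp [hs], fun n hn => hsA n (by simp [hn]),
      hsA nB (by simp), hu, hM, hv, hrA⟩

lemma interior {T : ℕ → V → ℕ} {NE : ℕ → V → V → Bool → Bool → Prop} {N : ℕ → V → Prop}
    (c : ∀ θ, Ctx κ Zc G τ A S a1 a2 a3 D (T θ) (NE θ) (N θ)) (hT3 : ∀ θ, T θ a3 = θ)
    (hsymm : ∀ θ a b ma mb, NE θ a b ma mb → NE θ b a mb ma) {P : List (Nd V)}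
    (h : PathOK κ Xc Yc Zc (Edge G) (An κ Zc G) S P) (hX : A ∉ Xc) (hY : A ∉ Yc) :
    ∃ θ P', PathOK κ Xc Yc Zc (NE θ) (N θ) (S3 κ A S a1 a2 a3) P' := by
  have hτ := (c 0).hτ
  by_cases hA : ∀ n ∈ P, κ n.x ≠ A
  · exact ⟨0, P, TailOK.old (c 0) h.1 hA, h.2⟩
  obtain ⟨L1, M, mid, L2, nB, nu, nv, nE, rfl, hL, hB, hu, hM, hv, hE⟩ := decomp h hX hY hA
  have hvM : nv ∈ nu :: M := by rw [hM]; simp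
  have hch := List.isChain_append_cons_cons.1 h.1.chain
  have hBu : Edge G nB.x nu.x nB.mr nu.ml := hch.2.1
  have hEv : Edge G nv.x nE.x nv.mr nE.ml := by
    have := h.1.chain
    rw [hM, show L1 ++ nB :: (mid ++ nv :: nE :: L2) = (L1 ++ nB :: mid) ++ nv :: nE :: L2 by simp,
      List.isChain_append_cons_cons] at this
    exact this.2.1
  have hmemM : ∀ m ∈ nu :: M, m ∈ L1 ++ nB :: nu :: M := by
    intro m hm; simp at hm ⊢; tauto
  cases hul : nu.ml with
  | true =>
    cases hvr : nv.mr with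
    | false => exact interiorTF c hT3 h hL hB hu hM hv hE hul hvr
    | true =>
      have huA : An κ Zc G nu.x := by
        rcases dirR (κ := κ) (Zc := Zc) hτ M nu hch.2.2
          (fun m hm => h.1.mid m (hmemM m hm)) hul with h | h
        · exact h
        · have := (h nv hvM).2
          simp [hvr] at this
      have hpre : mid ++ [nv] <+: nu :: M := ⟨nE :: L2, by rw [hM]; simp⟩
      have hvA : An κ Zc G nv.x := by
        rcases dirL (κ := κ) (Zc := Zc) hτ mid nv (hch.2.2.prefix hpre)
          (fun m hm => h.1.mid m (hmemM m (hpre.subset hm))) hvr with h | h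
        · exact h
        · have hun : nu ∈ mid ++ [nv] := by
            cases mid with
            | nil => simp at hM; simp [hM.1]
            | cons b mid => simp at hM; simp [hM.1]
          have := (h nu hun).2
          simp [hul] at this
      have huD := (c 0).hD _ hu huA
      have hvD := (c 0).hD _ hv hvA
      refine ⟨0, merge (c 0) (q := a2) h hL hB hu hM hv hE (by simp) ?_ ?_ ?_ ?_ ?_⟩
      · intro hf
        have := hτ _ _ (hBu.l hf).1
        rw [(c 0).T2]; omega
      · intro hf; rw [hul] at hf; simp at hf
      · intro hf; rw [hvr] at hf; simp at hf
      · intro hf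
        have := hτ _ _ (hEv.r hf).1
        rw [(c 0).T2]; omega
      · exact ⟨fun _ => (c 0).N2 _ hu huA, by simp [hul, hvr]⟩
  | false =>
    cases hvr : nv.mr with
    | false =>
      have hZ : A ∉ Zc := by
        have := (h.1.mid nv (hmemM nv hvM)).2 (by simp [hvr])
        rwa [hv] at this
      have h1 := hBu.r hul
      have h2 := hEv.l hvr
      refine ⟨0, merge (c 0) (q := a3) h hL hB hu hM hv hE (by simp) ?_ ?_ ?_ ?_ ?_⟩
      · intro hf; rw [h1.2] at hf; simp at hf
      · intro _; rw [hT3]; have := hτ _ _ h1.1; omega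
      · intro _; rw [hT3]; have := hτ _ _ h2.1; omega
      · intro hf; rw [h2.2] at hf; simp at hf
      · exact ⟨by simp [hul], fun _ => by simpa [(c 0).k3] using hZ⟩
    | true =>
      have hr := h.rev Edge.symm
      have hlA : ∀ n ∈ (L2.reverse.map Nd.swap), κ n.x ≠ A := by
        intro n hn
        simp only [List.mem_map, List.mem_reverse] at hn
        obtain ⟨m, hm, rfl⟩ := hn
        exact hE m (by simp [hm])
      obtain ⟨mid', hmid'⟩ : ∃ mid', nv.swap :: (mid.reverse.map Nd.swap) = mid' ++ [nu.swap] := by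
        cases mid with
        | nil =>
          simp at hM
          exact ⟨[], by simp [hM.1]⟩
        | cons b mid =>
          simp at hM
          exact ⟨nv.swap :: mid.reverse.map Nd.swap, by simp [hM.1]⟩
      have eP : (L1 ++ nB :: nu :: M).reverse.map Nd.swap = (L2.reverse.map Nd.swap) ++ nE.swap ::
          nv.swap :: ((mid.reverse.map Nd.swap) ++ nB.swap :: (L1.reverse.map Nd.swap)) := by
        rw [hM]; simp
      rw [eP] at hr
      have e1 : nv.swap :: ((mid.reverse.map Nd.swap) ++ nB.swap :: (L1.reverse.map Nd.swap)) =
          mid' ++ nu.swap :: nB.swap :: (L1.reverse.map Nd.swap) := by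
        rw [← List.cons_append, hmid', List.append_assoc]; rfl
      have e2 : ∀ n ∈ nB.swap :: (L1.reverse.map Nd.swap), κ n.x ≠ A := by
        intro n hn
        rcases List.mem_cons.1 hn with rfl | hn
        · exact hB
        · simp only [List.mem_map, List.mem_reverse] at hn
          obtain ⟨m, hm, rfl⟩ := hn
          exact hL m hm
      obtain ⟨θ, P', hP'⟩ := interiorTF c hT3 hr hlA (hE nE (by simp)) hv e1 hu e2 hvr hul
      exact ⟨θ, _, hP'.rev (hsymm θ)⟩

lemma endX {T : ℕ → V → ℕ} {NE : ℕ → V → V → Bool → Bool → Prop} {N : ℕ → V → Prop}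
    (c : ∀ θ, Ctx κ Zc G τ A S a1 a2 a3 D (T θ) (NE θ) (N θ)) (hT3 : ∀ θ, T θ a3 = θ)
    {P : List (Nd V)} (h : PathOK κ Xc Yc Zc (Edge G) (An κ Zc G) S P) (hX : A ∈ Xc) (hY : A ∉ Yc)
    (hZ : A ∉ Zc) :
    ∃ θ P', PathOK κ Xc Yc Zc (NE θ) (N θ) (S3 κ A S a1 a2 a3) P' := by
  have hτ := (c 0).hτ
  rcases split_last (fun n : Nd V => κ n.x = A) P with hA | ⟨mid, nv, r, rfl, hv, hrA⟩
  · exact ⟨0, P, TailOK.old (c 0) h.1 hA, h.2⟩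
  cases r with
  | nil =>
    obtain ⟨⟨⟨t, n, hn, hnY⟩, -⟩, -⟩ := h
    have := congrArg List.getLast? hn
    simp at this
    rw [← this, hv] at hnY
    exact absurd hnY hY
  | cons nE L2 =>
    have hEv : Edge G nv.x nE.x nv.mr nE.ml := (List.isChain_append_cons_cons.1 h.1.chain).2.1
    have hsuf : nE :: L2 <:+ mid ++ nv :: nE :: L2 := ⟨mid ++ [nv], by simp⟩
    have hT := TailOK.old (c (τ nv.x)) (h.1.suffix hsuf (by simp)) hrA
    refine ⟨τ nv.x, ⟨a3, false, nv.mr⟩ :: nE :: L2, hT.cons ?_ ?_ (by simp) ?_, _, _, rfl, ?_⟩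
    · refine (c _).linkL hEv (hrA nE (by simp)) (h.1.inS nE (hsuf.subset (by simp))) hv (by simp) ?_ ?_
      · intro hf; simp only [hT3]; exact hτ _ _ (hEv.l hf).1
      · intro hf; simp only [hT3]; exact hτ _ _ (hEv.r hf).1
    · exact ⟨by simp, fun _ => by simpa [(c 0).k3] using hZ⟩
    · intro m hm heq
      simp only at heq
      exact hrA m hm (heq ▸ (c 0).k3)
    · simpa [(c 0).k3] using hX

lemma coreAll {T : ℕ → V → ℕ} {NE : ℕ → V → V → Bool → Bool → Prop} {N : ℕ → V → Prop}
    (c : ∀ θ, Ctx κ Zc G τ A S a1 a2 a3 D (T θ) (NE θ) (N θ)) (hT3 : ∀ θ, T θ a3 = θ)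
    (hsymm : ∀ θ a b ma mb, NE θ a b ma mb → NE θ b a mb ma) {P : List (Nd V)}
    (h : PathOK κ Xc Yc Zc (Edge G) (An κ Zc G) S P) (hXY : Disjoint Xc Yc) (hXZ : Disjoint Xc Zc)
    (hYZ : Disjoint Yc Zc) :
    ∃ θ P', PathOK κ Xc Yc Zc (NE θ) (N θ) (S3 κ A S a1 a2 a3) P' := by
  by_cases hX : A ∈ Xc
  · exact endX c hT3 h hX (Set.disjoint_left.1 hXY hX) (Set.disjoint_left.1 hXZ hX)
  · by_cases hY : A ∈ Yc
    · obtain ⟨θ, P', hP'⟩ := endX c hT3 (h.rev Edge.symm) hY hX (Set.disjoint_left.1 hYZ hY)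
      exact ⟨θ, _, hP'.rev (hsymm θ)⟩
    · exact interior c hT3 hsymm h hX hY
end core

lemma sim.kap {V C : Type*} {κ : V → C} {A : C} {a b : V} (h : sim κ A a b) : κ a = κ b := by
  rcases h with rfl | ⟨h1, h2⟩
  · rfl
  · rw [h1, h2]

lemma sim.eq {V C : Type*} {κ : V → C} {A : C} {a b : V} (h : sim κ A a b) (hb : κ b ≠ A) :
    a = b := by
  rcases h with rfl | ⟨h1, h2⟩
  · rfl
  · exact absurd h2 hb

/-- The saturated graph. -/
def gs {V C : Type*} (κ : V → C) (A : C) (S' : Set V) (T : V → ℕ) (G : MixedGraph V) :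
    MixedGraph V where
  dir a b := a ∈ S' ∧ b ∈ S' ∧ T a < T b ∧ ∃ a0 b0, G.dir a0 b0 ∧ sim κ A a0 a ∧ sim κ A b0 b
  bidir a b := a ∈ S' ∧ b ∈ S' ∧ a ≠ b ∧
    ∃ a0 b0, a0 ≠ b0 ∧ G.bidir a0 b0 ∧ sim κ A a0 a ∧ sim κ A b0 b
  bidir_symm a b := by
    rintro ⟨h1, h2, h3, a0, b0, h4, h5, h6, h7⟩
    exact ⟨h2, h1, h3.symm, b0, a0, h4.symm, G.bidir_symm _ _ h5, h7, h6⟩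

def ne {V C : Type*} (κ : V → C) (A : C) (S' : Set V) (T : V → ℕ) (G : MixedGraph V) (a b : V) :
    Bool → Bool → Prop
  | true, true => (gs κ A S' T G).bidir a b
  | false, true => (gs κ A S' T G).dir a b ∧ (κ a ≠ A → κ b ≠ A → ¬ G.bidir a b)
  | true, false => (gs κ A S' T G).dir b a ∧ (κ a ≠ A → κ b ≠ A → ¬ G.bidir a b)
  | false, false => False

lemma ne_symm {V C : Type*} {κ : V → C} {A : C} {S' : Set V} {T : V → ℕ} {G : MixedGraph V} (a b : V)
    (ma mb : Bool) (h : ne κ A S' T G a b ma mb) : ne κ A S' T G b a mb ma := by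
  have h1 := G.bidir_symm
  have h2 := (gs κ A S' T G).bidir_symm
  cases ma <;> cases mb <;> simp only [ne] at * <;> grind

structure St {V C : Type*} (κ : V → C) (H : MixedGraph C) (Xc Yc Zc : Set C) (S : Set V)
    (G : MixedGraph V) (P : List (Nd V)) : Prop where
  acyc : ∃ τ : V → ℕ, ∀ a b, G.dir a b → τ a < τ b
  irr : ∀ a, ¬ G.bidir a a
  dS : ∀ a b, G.dir a b → a ∈ S ∧ b ∈ S
  bS : ∀ a b, G.bidir a b → a ∈ S ∧ b ∈ S
  cd : ∀ A B, H.dir A B ↔ ∃ a b, κ a = A ∧ κ b = B ∧ G.dir a b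
  cb : ∀ A B, H.bidir A B ↔ ∃ a b, κ a = A ∧ κ b = B ∧ G.bidir a b
  path : PathOK κ Xc Yc Zc (Edge G) (An κ Zc G) S P

open Classical in
lemma mkCtx {V C : Type*} {κ : V → C} {Zc : Set C} {G : MixedGraph V} {τ : V → ℕ} {A : C} {S S' : Set V}
    {a1 a2 a3 : V} {D : ℕ} {T : V → ℕ}
    (hτ : ∀ a b, G.dir a b → τ a < τ b) (irr : ∀ a, ¬ G.bidir a a)
    (dS : ∀ a b, G.dir a b → a ∈ S ∧ b ∈ S)
    (hS : ∀ v, (v ∈ S ∧ κ v ≠ A ∨ v = a1 ∨ v = a2 ∨ v = a3) → v ∈ S')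
    (k1 : κ a1 = A) (k2 : κ a2 = A) (k3 : κ a3 = A) (n12 : a1 ≠ a2) (n13 : a1 ≠ a3) (n23 : a2 ≠ a3)
    (hT : ∀ v, κ v ≠ A → T v = τ v) (T1 : T a1 = 0) (T2 : T a2 = D)
    (hD : ∀ a, κ a = A → An κ Zc G a → τ a ≤ D)
    (hD2 : ∀ a, κ a = A → An κ Zc G a → ∃ d, κ d = A ∧ An κ Zc G d ∧ τ d = D) :
    Ctx κ Zc G τ A S a1 a2 a3 D T (ne κ A S' T G) (An κ Zc (gs κ A S' T G)) := by
  let ρ : V → V := fun x => if κ x = A then a2 else x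
  have hρA : ∀ x, κ x = A → ρ x = a2 := fun x hx => by simp [ρ, hx]
  have hρ : ∀ x, κ x ≠ A → ρ x = x := fun x hx => by simp [ρ, hx]
  have hρS : ∀ x ∈ S, ρ x ∈ S' := by
    intro x hx
    by_cases h : κ x = A
    · rw [hρA x h]; exact hS _ (by simp)
    · rw [hρ x h]; exact hS _ (Or.inl ⟨hx, h⟩)
  have hsim : ∀ x, sim κ A x (ρ x) := by
    intro x
    by_cases h : κ x = A
    · rw [hρA x h]; exact Or.inr ⟨h, k2⟩
    · rw [hρ x h]; exact Or.inl rfl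
  have hedge : ∀ x y, G.dir x y → T (ρ x) < T (ρ y) → (gs κ A S' T G).dir (ρ x) (ρ y) :=
    fun x y h1 h2 => ⟨hρS x (dS _ _ h1).1, hρS y (dS _ _ h1).2, h2, x, y, h1, hsim x, hsim y⟩
  have claim1 : ∀ x z, κ z ∈ Zc → Relation.ReflTransGen G.dir x z → D ≤ τ x →
      An κ Zc (gs κ A S' T G) (ρ x) := by
    intro x z hz hr
    induction hr using Relation.ReflTransGen.head_induction_on with
    | refl => intro _; exact ⟨ρ z, by rwa [← (hsim z).kap], Relation.ReflTransGen.refl⟩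
    | @head x y hxy hyz ih =>
      intro hDx
      have hlt := hτ _ _ hxy
      obtain ⟨w, hw, hw'⟩ := ih (by omega)
      refine ⟨w, hw, Relation.ReflTransGen.head (hedge x y hxy ?_) hw'⟩
      have hy : κ y ≠ A := by
        intro hy
        have := hD y hy ⟨z, hz, hyz⟩
        omega
      rw [hρ y hy, hT y hy]
      by_cases h : κ x = A
      · rw [hρA x h, T2]; omega
      · rw [hρ x h, hT x h]; omega
  have N2 : ∀ a, κ a = A → An κ Zc G a → An κ Zc (gs κ A S' T G) a2 := by
    intro a ha h
    obtain ⟨d, hd, ⟨z, hz, hdz⟩, hdD⟩ := hD2 a ha h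
    have := claim1 d z hz hdz (by omega)
    rwa [hρA d hd] at this
  have claim2 : ∀ x z, κ z ∈ Zc → Relation.ReflTransGen G.dir x z →
      An κ Zc (gs κ A S' T G) (ρ x) := by
    intro x z hz hr
    induction hr using Relation.ReflTransGen.head_induction_on with
    | refl => exact ⟨ρ z, by rwa [← (hsim z).kap], Relation.ReflTransGen.refl⟩
    | @head x y hxy hyz ih =>
      have hlt := hτ _ _ hxy
      by_cases h : κ x = A
      · rw [hρA x h]
        exact N2 x h ⟨z, hz, Relation.ReflTransGen.head hxy hyz⟩
      · obtain ⟨w, hw, hw'⟩ := ih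
        refine ⟨w, hw, Relation.ReflTransGen.head (hedge x y hxy ?_) hw'⟩
        rw [hρ x h, hT x h]
        by_cases hy : κ y = A
        · rw [hρA y hy, T2]
          have := hD y hy ⟨z, hz, hyz⟩
          omega
        · rw [hρ y hy, hT y hy]; omega
  refine ⟨hτ, k1, k2, k3, n12, n13, n23, hT, T1, T2, hD, ?_, ?_, N2⟩
  · intro a b a' b' ma mb hE sa sb ha' hb' hne h1 h2
    have q1 := hS _ ha'
    have q2 := hS _ hb'
    have hnb : ¬ G.bidir a b → κ a' ≠ A → κ b' ≠ A → ¬ G.bidir a' b' := by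
      intro h h3 h4
      rwa [← sa.eq h3, ← sb.eq h4]
    cases ma <;> cases mb
    · exact hE
    · exact ⟨⟨q1, q2, h1 rfl, a, b, hE.1, sa, sb⟩, hnb hE.2⟩
    · exact ⟨⟨q2, q1, h2 rfl, b, a, hE.1, sb, sa⟩, hnb hE.2⟩
    · refine ⟨q1, q2, hne, a, b, ?_, hE, sa, sb⟩
      rintro rfl
      exact irr _ hE
  · rintro x hx ⟨z, hz, hr⟩
    have := claim2 x z hz hr
    rwa [hρ x hx] at this

/-- The consecutive pairs of the path that are joined by a directed edge. -/
def RP {V : Type*} (P : List (Nd V)) (a b : V) : Prop :=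
  ∃ (i : ℕ) (h : i + 1 < P.length), ¬ (P[i].mr = true ∧ P[i+1].ml = true) ∧
    (P[i].x = a ∧ P[i+1].x = b ∨ P[i].x = b ∧ P[i+1].x = a)

/-- The final graph of a step. -/
def gf {V C : Type*} (κ : V → C) (A : C) (G : MixedGraph V) (P : List (Nd V)) : MixedGraph V where
  dir := G.dir
  bidir a b := G.bidir a b ∧ ¬ ((κ a = A ∨ κ b = A) ∧ RP P a b)
  bidir_symm a b := by
    rintro ⟨h1, h2⟩
    refine ⟨G.bidir_symm _ _ h1, ?_⟩
    rintro ⟨h3, i, h, h4, h5⟩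
    exact h2 ⟨h3.symm, i, h, h4, h5.symm⟩

open Classical in
lemma step {V C : Type*} [Finite V] {κ : V → C} {H : MixedGraph C} {Xc Yc Zc : Set C}
    (hXY : Disjoint Xc Yc) (hXZ : Disjoint Xc Zc) (hYZ : Disjoint Yc Zc) {S : Set V}
    {G : MixedGraph V} {P : List (Nd V)} (h : St κ H Xc Yc Zc S G P) (A : C)
    (hA : 4 < (S ∩ κ ⁻¹' {A}).ncard) :
    ∃ S' G' P', St κ H Xc Yc Zc S' G' P' ∧ S' ⊆ S ∧ (S' ∩ κ ⁻¹' {A}).ncard ≤ 4 := by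
  obtain ⟨⟨τ, hτ⟩, irr, dS, bS, cd, cb, hP⟩ := h
  -- four distinct vertices
  obtain ⟨a1, a2, a3, a4, m1, m2, m3, m4, n12, n13, n14, n23, n24, n34⟩ :
      ∃ a1 a2 a3 a4, a1 ∈ S ∩ κ ⁻¹' {A} ∧ a2 ∈ S ∩ κ ⁻¹' {A} ∧ a3 ∈ S ∩ κ ⁻¹' {A} ∧
        a4 ∈ S ∩ κ ⁻¹' {A} ∧ a1 ≠ a2 ∧ a1 ≠ a3 ∧ a1 ≠ a4 ∧ a2 ≠ a3 ∧ a2 ≠ a4 ∧ a3 ≠ a4 := by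
    obtain ⟨t, ht, hc⟩ := Set.exists_subset_card_eq hA.le
    obtain ⟨x, y, z, w, h1, h2, h3, h4, h5, h6, rfl⟩ := Set.ncard_eq_four.1 hc
    exact ⟨x, y, z, w, ht (by simp), ht (by simp), ht (by simp), ht (by simp), h1, h2, h3, h4, h5, h6⟩
  have k1 : κ a1 = A := m1.2
  have k2 : κ a2 = A := m2.2
  have k3 : κ a3 = A := m3.2
  have k4 : κ a4 = A := m4.2
  -- bounds
  obtain ⟨M, hM⟩ : ∃ M, ∀ v, τ v ≤ M := by
    obtain ⟨M, hM⟩ := (Set.finite_range τ).bddAbove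
    exact ⟨M, fun v => hM ⟨v, rfl⟩⟩
  obtain ⟨D, hDM, hD, hD2⟩ : ∃ D, D ≤ M ∧ (∀ a, κ a = A → An κ Zc G a → τ a ≤ D) ∧
      (∀ a, κ a = A → An κ Zc G a → ∃ d, κ d = A ∧ An κ Zc G d ∧ τ d = D) := by
    by_cases hne : {a | κ a = A ∧ An κ Zc G a}.Nonempty
    · obtain ⟨d, hd, hmax⟩ := Set.exists_max_image _ τ (Set.toFinite _) hne
      exact ⟨τ d, hM d, fun a h1 h2 => hmax a ⟨h1, h2⟩, fun a h1 h2 => ⟨d, hd.1, hd.2, rfl⟩⟩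
    · refine ⟨0, by omega, fun a h1 h2 => absurd ⟨a, h1, h2⟩ hne, fun a h1 h2 => absurd ⟨a, h1, h2⟩ hne⟩
  let S' : Set V := {v | v ∈ S ∧ κ v ≠ A ∨ v = a1 ∨ v = a2 ∨ v = a3 ∨ v = a4}
  let T : ℕ → V → ℕ := fun θ v => if v = a1 then 0 else if v = a2 then D else if v = a3 then θ else
    if v = a4 then M + θ + 1 else τ v
  have T1 : ∀ θ, T θ a1 = 0 := fun θ => by simp [T]
  have T2 : ∀ θ, T θ a2 = D := fun θ => by simp [T, n12.symm]
  have T3 : ∀ θ, T θ a3 = θ := fun θ => by simp [T, n13.symm, n23.symm]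
  have T4 : ∀ θ, T θ a4 = M + θ + 1 := fun θ => by simp [T, n14.symm, n24.symm, n34.symm]
  have hT : ∀ θ v, κ v ≠ A → T θ v = τ v := by
    intro θ v hv
    have h1 : v ≠ a1 := by rintro rfl; exact hv k1
    have h2 : v ≠ a2 := by rintro rfl; exact hv k2
    have h3 : v ≠ a3 := by rintro rfl; exact hv k3
    have h4 : v ≠ a4 := by rintro rfl; exact hv k4
    simp [T, h1, h2, h3, h4]
  have c : ∀ θ, Ctx κ Zc G τ A S a1 a2 a3 D (T θ) (ne κ A S' (T θ) G)
      (An κ Zc (gs κ A S' (T θ) G)) := fun θ =>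
    mkCtx hτ irr dS (by intro v hv; simp only [S', Set.mem_setOf_eq]; tauto) k1 k2 k3 n12 n13 n23
      (hT θ) (T1 θ) (T2 θ) hD hD2
  obtain ⟨θ, P', hP'⟩ := coreAll c T3 (fun θ => ne_symm) hP hXY hXZ hYZ
  have hS'S : S' ⊆ S := by
    rintro v (h | rfl | rfl | rfl | rfl)
    exacts [h.1, m1.1, m2.1, m3.1, m4.1]
  have hRP4 : ∀ b, ¬ RP P' a4 b ∧ ¬ RP P' b a4 := by
    have : ∀ n ∈ P', n.x ≠ a4 := by
      intro n hn heq
      rcases hP'.1.inS n hn with h | h | h | h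
      · rw [heq] at h; exact h.2 k4
      · exact n14 (h.symm.trans heq)
      · exact n24 (h.symm.trans heq)
      · exact n34 (h.symm.trans heq)
    intro b
    constructor
    · rintro ⟨i, h, -, h2 | h2⟩
      · exact this _ (List.getElem_mem _) h2.1
      · exact this _ (List.getElem_mem _) h2.2
    · rintro ⟨i, h, -, h2 | h2⟩
      · exact this _ (List.getElem_mem _) h2.2
      · exact this _ (List.getElem_mem _) h2.1
  refine ⟨S', gf κ A (gs κ A S' (T θ) G) P', P', ⟨⟨T θ, fun a b h => h.2.2.1⟩,
    fun a h => h.1.2.2.1 rfl, fun a b h => ⟨h.1, h.2.1⟩, fun a b h => ⟨h.1.1, h.1.2.1⟩, ?_, ?_, ?_⟩,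
    hS'S, ?_⟩
  · intro B1 B2
    rw [cd]
    constructor
    · rintro ⟨a, b, rfl, rfl, hab⟩
      have hlt := hτ _ _ hab
      have haS := (dS _ _ hab).1
      have hbS := (dS _ _ hab).2
      have ta := hM a
      have tb := hM b
      by_cases ha : κ a = A <;> by_cases hb : κ b = A
      · exact ⟨a1, a4, by rw [ha, k1], by rw [hb, k4], by simp [S'], by simp [S'],
          by rw [T1, T4]; omega, a, b, hab, Or.inr ⟨ha, k1⟩, Or.inr ⟨hb, k4⟩⟩
      · exact ⟨a1, b, by rw [ha, k1], rfl, by simp [S'], Or.inl ⟨hbS, hb⟩,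
          by rw [T1, hT _ _ hb]; omega, a, b, hab, Or.inr ⟨ha, k1⟩, Or.inl rfl⟩
      · exact ⟨a, a4, rfl, by rw [hb, k4], Or.inl ⟨haS, ha⟩, by simp [S'],
          by rw [T4, hT _ _ ha]; omega, a, b, hab, Or.inl rfl, Or.inr ⟨hb, k4⟩⟩
      · exact ⟨a, b, rfl, rfl, Or.inl ⟨haS, ha⟩, Or.inl ⟨hbS, hb⟩,
          by rw [hT _ _ hb, hT _ _ ha]; omega, a, b, hab, Or.inl rfl, Or.inl rfl⟩
    · rintro ⟨a, b, rfl, rfl, -, -, -, a0, b0, h1, h2, h3⟩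
      exact ⟨a0, b0, h2.kap, h3.kap, h1⟩
  · intro B1 B2
    rw [cb]
    constructor
    · rintro ⟨a, b, rfl, rfl, hab⟩
      have haS := (bS _ _ hab).1
      have hbS := (bS _ _ hab).2
      have hne : a ≠ b := by rintro rfl; exact irr _ hab
      by_cases ha : κ a = A <;> by_cases hb : κ b = A
      · exact ⟨a1, a4, by rw [ha, k1], by rw [hb, k4], ⟨by simp [S'], by simp [S'], n14, a, b, hne,
          hab, Or.inr ⟨ha, k1⟩, Or.inr ⟨hb, k4⟩⟩, fun h => (hRP4 _).2 h.2⟩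
      · exact ⟨a4, b, by rw [ha, k4], rfl, ⟨by simp [S'], Or.inl ⟨hbS, hb⟩,
          by rintro rfl; exact hb k4, a, b, hne, hab, Or.inr ⟨ha, k4⟩, Or.inl rfl⟩,
          fun h => (hRP4 _).1 h.2⟩
      · exact ⟨a, a4, rfl, by rw [hb, k4], ⟨Or.inl ⟨haS, ha⟩, by simp [S'],
          by rintro rfl; exact ha k4, a, b, hne, hab, Or.inl rfl, Or.inr ⟨hb, k4⟩⟩,
          fun h => (hRP4 _).2 h.2⟩
      · exact ⟨a, b, rfl, rfl, ⟨Or.inl ⟨haS, ha⟩, Or.inl ⟨hbS, hb⟩, hne, a, b, hne, hab,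
          Or.inl rfl, Or.inl rfl⟩, fun h => h.1.elim ha hb⟩
    · rintro ⟨a, b, rfl, rfl, ⟨-, -, -, a0, b0, -, h1, h2, h3⟩, -⟩
      exact ⟨a0, b0, h2.kap, h3.kap, h1⟩
  · obtain ⟨⟨q1, q2, q3, q4, q5⟩, q6⟩ := hP'
    refine ⟨⟨q1, ?_, q3, q4, ?_⟩, q6⟩
    · rw [List.isChain_iff_getElem] at q2 ⊢
      intro i hi
      have hl : ne κ A S' (T θ) G P'[i].x P'[i+1].x P'[i].mr P'[i+1].ml := q2 i hi
      have hinj : ∀ (j k : ℕ) (hj : j < P'.length) (hk : k < P'.length),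
          P'[j].x = P'[k].x → j = k := by
        intro j k hj hk hjk
        rw [List.pairwise_iff_getElem] at q4
        rcases lt_trichotomy j k with h | h | h
        · exact absurd hjk (q4 j k hj hk h)
        · exact h
        · exact absurd hjk.symm (q4 k j hk hj h)
      have hdir : ¬ (P'[i].mr = true ∧ P'[i+1].ml = true) →
          (κ P'[i].x ≠ A → κ P'[i+1].x ≠ A → ¬ G.bidir P'[i].x P'[i+1].x) →
          ¬ (gf κ A (gs κ A S' (T θ) G) P').bidir P'[i].x P'[i+1].x := by
        rintro h1 h2 ⟨⟨-, -, -, a0, b0, -, h4, h5, h6⟩, h7⟩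
        by_cases hh : κ P'[i].x = A ∨ κ P'[i+1].x = A
        · exact h7 ⟨hh, i, hi, h1, Or.inl ⟨rfl, rfl⟩⟩
        · push Not at hh
          rw [h5.eq hh.1, h6.eq hh.2] at h4
          exact h2 hh.1 hh.2 h4
      change Edge (gf κ A (gs κ A S' (T θ) G) P') P'[i].x P'[i+1].x P'[i].mr P'[i+1].ml
      cases hm : P'[i].mr <;> cases hm' : P'[i+1].ml <;> rw [hm, hm'] at hl hdir
      · exact hl
      · exact ⟨hl.1, hdir (by simp) hl.2⟩
      · exact ⟨hl.1, hdir (by simp) hl.2⟩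
      · refine ⟨hl, ?_⟩
        rintro ⟨-, j, hj, hj2, ⟨hj3, hj4⟩ | ⟨hj3, hj4⟩⟩
        · obtain rfl := hinj _ _ _ _ hj3
          exact hj2 ⟨hm, hm'⟩
        · have e1 := hinj _ _ _ _ hj3
          have e2 := hinj _ _ _ _ hj4
          omega
    · intro n hn
      have := q5 n hn
      simp only [S', Set.mem_setOf_eq] at this ⊢
      tauto
  · have : S' ∩ κ ⁻¹' {A} ⊆ {a1, a2, a3, a4} := by
      rintro v ⟨h | h, h2⟩
      · exact absurd h2 h.2
      · exact h
    refine (Set.ncard_le_ncard this).trans ?_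
    refine (Set.ncard_insert_le _ _).trans ?_
    have := Set.ncard_insert_le a2 {a3, a4}
    have := Set.ncard_insert_le a3 {a4}
    have := Set.ncard_singleton a4
    omega

lemma reduceAll {V C : Type*} [Finite V] {κ : V → C} {H : MixedGraph C} {Xc Yc Zc : Set C}
    (hXY : Disjoint Xc Yc) (hXZ : Disjoint Xc Zc) (hYZ : Disjoint Yc Zc) (s : Finset C) {S : Set V}
    {G : MixedGraph V} {P : List (Nd V)} (h : St κ H Xc Yc Zc S G P) :
    ∃ S' G' P', St κ H Xc Yc Zc S' G' P' ∧ ∀ A ∈ s, (S' ∩ κ ⁻¹' {A}).ncard ≤ 4 := by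
  classical
  induction s using Finset.induction_on with
  | empty => exact ⟨S, G, P, h, by simp⟩
  | insert A s _ ih =>
    obtain ⟨S', G', P', h', hs⟩ := ih
    by_cases hA : 4 < (S' ∩ κ ⁻¹' {A}).ncard
    · obtain ⟨S2, G2, P2, h2, hsub, hc⟩ := step hXY hXZ hYZ h' A hA
      refine ⟨S2, G2, P2, h2, ?_⟩
      intro B hB
      rcases Finset.mem_insert.1 hB with rfl | hB
      · exact hc
      · exact (Set.ncard_le_ncard (Set.inter_subset_inter_left _ hsub)).trans (hs B hB)
    · refine ⟨S', G', P', h', ?_⟩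
      intro B hB
      rcases Finset.mem_insert.1 hB with rfl | hB
      · omega
      · exact hs B hB

/-- Push a graph forward along a map. -/
def pushG {V W : Type*} (f : V → W) (G : MixedGraph V) : MixedGraph W where
  dir a b := ∃ a0 b0, G.dir a0 b0 ∧ f a0 = a ∧ f b0 = b
  bidir a b := ∃ a0 b0, G.bidir a0 b0 ∧ f a0 = a ∧ f b0 = b
  bidir_symm a b := by
    rintro ⟨a0, b0, h1, h2, h3⟩
    exact ⟨b0, a0, G.bidir_symm _ _ h1, h3, h2⟩

lemma transfer {V W C : Type*} {κ : V → C} {κ' : W → C} {H : MixedGraph C} {Xc Yc Zc : Set C}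
    {S : Set V} {G : MixedGraph V} {P : List (Nd V)} (h : St κ H Xc Yc Zc S G P) (f : V → W)
    (hf : Set.InjOn f S) (hκ : ∀ v, κ' (f v) = κ v) :
    ∃ G' P', St κ' H Xc Yc Zc Set.univ G' P' := by
  obtain ⟨⟨τ, hτ⟩, irr, dS, bS, cd, cb, ⟨⟨t, nl, hl, hlY⟩, h2, h3, h4, h5⟩, n, t', ht', hn⟩ := h
  haveI : Nonempty V := ⟨n.x⟩
  have hinv := hf.leftInvOn_invFunOn
  let F : Nd V → Nd W := fun n => ⟨f n.x, n.ml, n.mr⟩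
  refine ⟨pushG f G, P.map F, ⟨fun w => τ (Function.invFunOn f S w), ?_⟩, ?_, by simp, by simp, ?_, ?_,
    ⟨⟨t.map F, F nl, by simp [hl], by simpa [F, hκ] using hlY⟩, ?_, ?_, ?_, by simp⟩, F n, t'.map F,
    by simp [ht'], by simpa [F, hκ] using hn⟩
  · rintro a b ⟨a0, b0, hab, rfl, rfl⟩
    have := dS _ _ hab
    have e := hτ _ _ hab
    rwa [← hinv this.1, ← hinv this.2] at e
  · rintro a ⟨a0, b0, hab, h1, h2⟩
    have := bS _ _ hab
    obtain rfl := hf this.1 this.2 (h1.trans h2.symm)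
    exact irr _ hab
  · intro A B
    rw [cd]
    constructor
    · rintro ⟨a, b, rfl, rfl, hab⟩
      exact ⟨f a, f b, hκ a, hκ b, a, b, hab, rfl, rfl⟩
    · rintro ⟨_, _, rfl, rfl, a, b, hab, rfl, rfl⟩
      exact ⟨a, b, (hκ a).symm, (hκ b).symm, hab⟩
  · intro A B
    rw [cb]
    constructor
    · rintro ⟨a, b, rfl, rfl, hab⟩
      exact ⟨f a, f b, hκ a, hκ b, a, b, hab, rfl, rfl⟩
    · rintro ⟨_, _, rfl, rfl, a, b, hab, rfl, rfl⟩
      exact ⟨a, b, (hκ a).symm, (hκ b).symm, hab⟩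
  · rw [List.isChain_map, List.isChain_iff_getElem]
    rw [List.isChain_iff_getElem] at h2
    intro i hi
    have hE : Edge G P[i].x P[i+1].x P[i].mr P[i+1].ml := h2 i hi
    have s1 := h5 P[i] (List.getElem_mem _)
    have s2 := h5 P[i+1] (List.getElem_mem _)
    have hnb : ¬ G.bidir P[i].x P[i+1].x → ¬ (pushG f G).bidir (f P[i].x) (f P[i+1].x) := by
      rintro hh ⟨a, b, hab, ha, hb⟩
      have := bS _ _ hab
      rw [hf this.1 s1 ha, hf this.2 s2 hb] at hab
      exact hh hab
    change Edge (pushG f G) (f P[i].x) (f P[i+1].x) P[i].mr P[i+1].ml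
    cases hm : P[i].mr <;> cases hm' : P[i+1].ml <;> rw [hm, hm'] at hE
    · exact hE
    · exact ⟨⟨_, _, hE.1, rfl, rfl⟩, hnb hE.2⟩
    · exact ⟨⟨_, _, hE.1, rfl, rfl⟩, hnb hE.2⟩
    · exact ⟨_, _, hE, rfl, rfl⟩
  · intro m hm
    obtain ⟨m, hmP, rfl⟩ := List.mem_map.1 hm
    obtain ⟨q1, q2⟩ := h3 m hmP
    refine ⟨fun hh => ?_, fun hh => by simpa [F, hκ] using q2 hh⟩
    obtain ⟨z, hz, hr⟩ := q1 hh
    exact ⟨f z, by rwa [hκ], hr.lift f (fun a b hab => ⟨a, b, hab, rfl, rfl⟩)⟩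
  · rw [List.pairwise_map]
    refine h4.imp_of_mem ?_
    intro a b ha hb hab heq
    exact hab (hf (h5 a ha) (h5 b hb) heq)

lemma exists_tau {V : Type*} [Finite V] {G : MixedGraph V} (h : G.Acyclic) :
    ∃ τ : V → ℕ, ∀ a b, G.dir a b → τ a < τ b := by
  refine ⟨fun v => {w | Relation.TransGen G.dir w v}.ncard, ?_⟩
  intro a b hab
  refine Set.ncard_lt_ncard ?_ (Set.toFinite _)
  rw [Set.ssubset_iff_of_subset]
  · exact ⟨a, Relation.TransGen.single hab, h a⟩
  · intro w hw
    exact Relation.TransGen.tail hw hab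

lemma Edge.intoR {V : Type*} {G : MixedGraph V} {τ : V → ℕ} (hτ : ∀ a b, G.dir a b → τ a < τ b)
    {a b : V} {ma mb : Bool} (h : Edge G a b ma mb) : G.intoHead a b ↔ mb = true := by
  have h1 := hτ a b
  have h2 := hτ b a
  have : ¬ (G.dir a b ∧ G.dir b a) := fun h => absurd (h1 h.1) (by have := h2 h.2; omega)
  cases ma <;> cases mb <;> simp only [Edge, MixedGraph.intoHead] at * <;> grind

lemma Edge.intoL {V : Type*} {G : MixedGraph V} {τ : V → ℕ} (hτ : ∀ a b, G.dir a b → τ a < τ b)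
    {a b : V} {ma mb : Bool} (h : Edge G a b ma mb) : G.intoHead b a ↔ ma = true :=
  Edge.intoR hτ (Edge.symm _ _ _ _ h)

lemma St.conv {C : Type*} {GC : ClusterDAG C} {Xc Yc Zc : Set C} {G : MixedGraph GC.MicroV}
    {P : List (Nd GC.MicroV)} (h : St Sigma.fst GC.graph Xc Yc Zc Set.univ G P) :
    GC.Compatible G ∧ G.DConnected (GC.microSet Xc) (GC.microSet Yc) (GC.microSet Zc) := by
  obtain ⟨⟨τ, hτ⟩, irr, -, -, cd, cb, ⟨⟨t, nl, hl, hlY⟩, h2, h3, h4, h5⟩, n, t', ht', hn⟩ := h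
  refine ⟨⟨?_, ?_, ?_, ?_, ?_⟩, P.map Nd.x, ⟨⟨⟨by simp [ht'], ?_⟩, ?_⟩, ?_⟩,
    ⟨n.x, hn, by simp [ht']⟩, ⟨nl.x, hlY, by simp [hl]⟩⟩
  · intro v hv
    have : ∀ w, Relation.TransGen G.dir v w → τ v < τ w := by
      intro w hw
      induction hw with
      | single h => exact hτ _ _ h
      | tail _ h ih => exact ih.trans (hτ _ _ h)
    exact absurd (this v hv) (lt_irrefl _)
  · intro A B _
    rw [cd]
    constructor
    · rintro ⟨⟨_, i⟩, ⟨_, j⟩, rfl, rfl, hab⟩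
      exact ⟨i, j, hab⟩
    · rintro ⟨i, j, hab⟩
      exact ⟨_, _, rfl, rfl, hab⟩
  · intro A B _
    rw [cb]
    constructor
    · rintro ⟨⟨_, i⟩, ⟨_, j⟩, rfl, rfl, hab⟩
      exact ⟨i, j, hab⟩
    · rintro ⟨i, j, hab⟩
      exact ⟨_, _, rfl, rfl, hab⟩
  · intro A
    rw [cd]
    constructor
    · rintro ⟨⟨_, i⟩, ⟨B, j⟩, hA, hB, hab⟩
      simp only at hA hB
      subst hA
      subst hB
      refine ⟨i, j, ?_, hab⟩
      rintro rfl
      exact absurd (hτ _ _ hab) (lt_irrefl _)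
    · rintro ⟨i, j, _, hab⟩
      exact ⟨_, _, rfl, rfl, hab⟩
  · intro A
    rw [cb]
    constructor
    · rintro ⟨⟨_, i⟩, ⟨B, j⟩, hA, hB, hab⟩
      simp only at hA hB
      subst hA
      subst hB
      refine ⟨i, j, ?_, hab⟩
      rintro rfl
      exact irr _ hab
    · rintro ⟨i, j, _, hab⟩
      exact ⟨_, _, rfl, rfl, hab⟩
  · change List.IsChain _ _
    rw [List.isChain_map]
    refine h2.imp ?_
    intro a b hab
    have hab : Edge G a.x b.x a.mr b.ml := hab
    cases hm : a.mr <;> cases hm' : b.ml <;> rw [hm, hm'] at hab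
    · exact hab.elim
    · exact Or.inl hab.1
    · exact Or.inr (Or.inl hab.1)
    · exact Or.inr (Or.inr hab)
  · intro i hi
    rw [List.isChain_iff_getElem] at h2
    have hi' : i + 2 < P.length := by simpa using hi
    have e1 : Edge G P[i].x P[i+1].x P[i].mr P[i+1].ml := h2 i (by omega)
    have e2 : Edge G P[i+1].x P[i+2].x P[i+1].mr P[i+2].ml := h2 (i+1) (by omega)
    obtain ⟨q1, q2⟩ := h3 P[i+1] (List.getElem_mem _)
    simp only [List.getElem_map]
    have hcol : G.Collider P[i].x P[i+1].x P[i+2].x ↔ (P[i+1].ml = true ∧ P[i+1].mr = true) := by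
      rw [MixedGraph.Collider, Edge.intoR hτ e1, Edge.intoL hτ e2]
    rw [MixedGraph.ActiveTriple, hcol]
    refine ⟨fun hh => Or.inr ?_, fun hh => q2 hh⟩
    obtain ⟨z, hz, hr⟩ := q1 hh
    exact ⟨z, hz, hr⟩
  · rw [List.nodup_iff_pairwise_ne, List.pairwise_map]
    exact h4

/-- Remove the bidirected self-loops of a graph. -/
def clean {V : Type*} (G : MixedGraph V) : MixedGraph V where
  dir := G.dir
  bidir a b := G.bidir a b ∧ a ≠ b
  bidir_symm a b h := ⟨G.bidir_symm _ _ h.1, h.2.symm⟩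

open Classical in
lemma mkTail {V C : Type*} {κ : V → C} {Yc Zc : Set C} {G : MixedGraph V} {τ : V → ℕ}
    (hτ : ∀ a b, G.dir a b → τ a < τ b) (hYZ : Disjoint Yc Zc) : ∀ (t : List V) (v : V) (b : Bool),
    (v :: t).IsChain G.adj → (v :: t).Nodup →
    (∀ (i : ℕ) (h : i + 2 < (v :: t).length), G.ActiveTriple {v | κ v ∈ Zc} ((v :: t)[i]'(by omega))
      ((v :: t)[i+1]'(by omega)) ((v :: t)[i+2]'h)) →
    (t = [] → κ v ∉ Zc ) →
    (∀ w t', t = w :: t' → MidN κ Zc (An κ Zc G) ⟨v, b, decide (G.intoHead w v)⟩) →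
    (∃ y, κ y ∈ Yc ∧ (v :: t).getLast? = some y) →
    ∃ n σ, TailOK κ Yc Zc (Edge (clean G)) (An κ Zc G) Set.univ (n :: σ) ∧ n.x = v ∧ n.ml = b ∧
      ∀ m ∈ n :: σ, m.x ∈ v :: t := by
  intro t
  induction t with
  | nil =>
    intro v b _ _ _ hm _ hy
    obtain ⟨y, hy, hy2⟩ := hy
    obtain rfl : v = y := by simpa using hy2
    refine ⟨⟨v, b, false⟩, [], ⟨⟨[], _, rfl, hy⟩, by simp, ?_, by simp, by simp⟩, rfl, rfl, by simp⟩
    intro m hm'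
    obtain rfl : m = ⟨v, b, false⟩ := by simpa using hm'
    exact ⟨by simp, fun _ => hm rfl⟩
  | cons w t ih =>
    intro v b hc hnd hact _ hm hy
    rw [List.isChain_cons_cons] at hc
    have hvw : v ∉ w :: t := (List.nodup_cons.1 hnd).1
    have hy' : ∃ y, κ y ∈ Yc ∧ (w :: t).getLast? = some y := by
      obtain ⟨y, h1, h2⟩ := hy
      exact ⟨y, h1, by simpa [List.getLast?_cons_cons] using h2⟩
    have r1 : t = [] → κ w ∉ Zc := by
      rintro rfl
      obtain ⟨y, hy, hy2⟩ := hy'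
      obtain rfl : w = y := by simpa using hy2
      exact Set.disjoint_left.1 hYZ hy
    have r2 : ∀ x t', t = x :: t' →
        MidN κ Zc (An κ Zc G) ⟨w, decide (G.intoHead v w), decide (G.intoHead x w)⟩ := by
      rintro x t' rfl
      obtain ⟨q1, q2⟩ := hact 0 (by simp)
      simp only [List.getElem_cons_zero, List.getElem_cons_succ, MixedGraph.Collider] at q1 q2
      constructor
      · simp only [decide_eq_true_eq]
        intro hh
        rcases q1 hh with h | ⟨d, hd, hr⟩
        · exact ⟨w, h, Relation.ReflTransGen.refl⟩
        · exact ⟨d, hd, hr⟩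
      · simp only [decide_eq_true_eq]
        exact q2
    obtain ⟨n, σ, hT, hx, hml, hsub⟩ := ih w (decide (G.intoHead v w)) hc.2 (List.nodup_cons.1 hnd).2
      (fun i hi => hact (i+1) (by simp at hi ⊢; omega)) r1 r2 hy'
    refine ⟨⟨v, b, decide (G.intoHead w v)⟩, n :: σ, hT.cons ?_ (hm w t rfl) (by simp) ?_, rfl, rfl, ?_⟩
    · rw [hx, hml]
      have hne : v ≠ w := by rintro rfl; simp at hvw
      have hadj := hc.1
      have := G.bidir_symm v w
      have := G.bidir_symm w v
      have hcc : ¬ (G.dir v w ∧ G.dir w v) := fun h =>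
        absurd (hτ _ _ h.1) (by have := hτ _ _ h.2; omega)
      simp only [MixedGraph.adj] at hadj
      by_cases c1 : G.intoHead w v <;> by_cases c2 : G.intoHead v w <;>
        simp only [c1, c2, decide_true, decide_false, Edge, clean] <;>
        simp only [MixedGraph.intoHead] at c1 c2 <;> grind
    · intro m hm' heq
      have := hsub m hm'
      rw [← heq] at this
      exact hvw this
    · intro m hm'
      rcases List.mem_cons.1 hm' with rfl | hm'
      · simp
      · exact List.mem_cons_of_mem _ (hsub m hm')

lemma toSt {C : Type*} [Finite C] {GC : ClusterDAG C} {Xc Yc Zc : Set C} {G : MixedGraph GC.MicroV}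
    (hXZ : Disjoint Xc Zc) (hYZ : Disjoint Yc Zc)
    (h : GC.Compatible G) (h' : G.DConnected (GC.microSet Xc) (GC.microSet Yc) (GC.microSet Zc)) :
    ∃ P, St Sigma.fst GC.graph Xc Yc Zc Set.univ (clean G) P := by
  obtain ⟨hac, c1, c2, c3, c4⟩ := h
  obtain ⟨τ, hτ⟩ := exists_tau hac
  obtain ⟨p, ⟨⟨⟨hne, hch⟩, hact⟩, hnd⟩, ⟨x, hx, hpx⟩, ⟨y, hy, hpy⟩⟩ := h'
  cases p with
  | nil => exact absurd rfl hne
  | cons v t =>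
    obtain rfl : v = x := by simpa using hpx
    have hvZ : v.1 ∉ Zc := Set.disjoint_left.1 hXZ hx
    obtain ⟨n, σ, hT, hnx, -, -⟩ := mkTail (κ := Sigma.fst) hτ hYZ t v false hch hnd hact
      (fun _ => hvZ) (fun w t' _ => ⟨by simp, fun _ => hvZ⟩) ⟨y, hy, hpy⟩
    refine ⟨n :: σ, ⟨τ, hτ⟩, fun a h => h.2 rfl, by simp, by simp, ?_, ?_, hT, n, σ, rfl, by rw [hnx]; exact hx⟩
    · intro A B
      by_cases hAB : A = B
      · subst hAB
        rw [c3]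
        constructor
        · rintro ⟨i, j, _, hab⟩
          exact ⟨_, _, rfl, rfl, hab⟩
        · rintro ⟨⟨_, i⟩, ⟨B, j⟩, hA, hB, hab⟩
          simp only at hA hB
          subst hA
          subst hB
          refine ⟨i, j, ?_, hab⟩
          rintro rfl
          exact absurd (hτ _ _ hab) (lt_irrefl _)
      · rw [c1 A B hAB]
        constructor
        · rintro ⟨i, j, hab⟩
          exact ⟨_, _, rfl, rfl, hab⟩
        · rintro ⟨⟨_, i⟩, ⟨_, j⟩, rfl, rfl, hab⟩
          exact ⟨i, j, hab⟩
    · intro A B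
      by_cases hAB : A = B
      · subst hAB
        rw [c4]
        constructor
        · rintro ⟨i, j, hij, hab⟩
          exact ⟨_, _, rfl, rfl, hab, by simpa using hij⟩
        · rintro ⟨⟨_, i⟩, ⟨B, j⟩, hA, hB, hab, hne⟩
          simp only at hA hB
          subst hA
          subst hB
          exact ⟨i, j, by simpa using hne, hab⟩
      · rw [c2 A B hAB]
        constructor
        · rintro ⟨i, j, hab⟩
          exact ⟨⟨A, i⟩, ⟨B, j⟩, rfl, rfl, hab, fun h => hAB (congrArg Sigma.fst h)⟩
        · rintro ⟨⟨_, i⟩, ⟨_, j⟩, rfl, rfl, hab, -⟩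
          exact ⟨i, j, hab⟩

lemma exists_fiber_map {C : Type*} [Finite C] (GC : ClusterDAG C) (S : Set GC.MicroV)
    (hS : ∀ A, (S ∩ Sigma.fst ⁻¹' {A}).ncard ≤ 4) :
    ∃ f : GC.MicroV → GC.truncate4.MicroV, Set.InjOn f S ∧ ∀ v, (f v).1 = v.1 := by
  classical
  have key : ∀ A, ∃ g : GC.MicroV → Fin (GC.truncate4.size A),
      Set.InjOn g (S ∩ Sigma.fst ⁻¹' {A}) := by
    intro A
    have hsz : (S ∩ Sigma.fst ⁻¹' {A}).ncard ≤ GC.size A := by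
      have hsub : (S ∩ Sigma.fst ⁻¹' {A}) ⊆ Set.range (fun i : Fin (GC.size A) => (⟨A, i⟩ : GC.MicroV)) := by
        rintro ⟨B, i⟩ ⟨-, h⟩
        simp only [Set.mem_preimage, Set.mem_singleton_iff] at h
        subst h
        exact ⟨i, rfl⟩
      refine (Set.ncard_le_ncard hsub).trans ?_
      rw [← Set.image_univ]
      refine (Set.ncard_image_le (Set.toFinite _)).trans ?_
      simp
    haveI : Nonempty (Fin (GC.truncate4.size A)) := ⟨⟨0, GC.truncate4.size_pos A⟩⟩
    have hle : (S ∩ Sigma.fst ⁻¹' {A}).encard ≤ (Set.univ : Set (Fin (GC.truncate4.size A))).encard := by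
      rw [← (Set.toFinite _).cast_ncard_eq, ← (Set.toFinite _).cast_ncard_eq, Set.ncard_univ, Nat.card_fin]
      exact_mod_cast le_min hsz (hS A)
    obtain ⟨g, -, hg⟩ := (Set.toFinite (S ∩ Sigma.fst ⁻¹' {A})).exists_injOn_of_encard_le hle
    exact ⟨g, hg⟩
  choose g hg using key
  refine ⟨fun v => ⟨v.1, g v.1 v⟩, ?_, fun v => rfl⟩
  rintro ⟨A, i⟩ ha ⟨B, j⟩ hb hab
  have hAB : A = B := congrArg Sigma.fst hab
  subst hAB
  refine hg A ⟨ha, rfl⟩ ⟨hb, rfl⟩ ?_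
  simpa using hab

end InfFour


/-- (Infinity is at most four.) There is a compatible micro graph of
`G^C` with a `Z^m`-active path from `X^m` to `Y^m` iff there is one for the cluster-DAG
obtained by reducing every cluster of size greater than 4 to size 4. -/
theorem infinity_leq_four {C : Type*} [Fintype C] (GC : ClusterDAG C)
    (hadm : GC.Admissible)
    (Xc Yc Zc : Set C) (hXY : Disjoint Xc Yc) (hXZ : Disjoint Xc Zc) (hYZ : Disjoint Yc Zc) :
    (∃ Gm : MixedGraph GC.MicroV, GC.Compatible Gm ∧
        Gm.DConnected (GC.microSet Xc) (GC.microSet Yc) (GC.microSet Zc)) ↔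
    (∃ Gm4 : MixedGraph GC.truncate4.MicroV, GC.truncate4.Compatible Gm4 ∧
        Gm4.DConnected (GC.truncate4.microSet Xc) (GC.truncate4.microSet Yc)
          (GC.truncate4.microSet Zc)) := by
  constructor
  · rintro ⟨Gm, hc, hd⟩
    obtain ⟨P, hP⟩ := InfFour.toSt hXZ hYZ hc hd
    obtain ⟨S', G', P', hP', hS⟩ := InfFour.reduceAll hXY hXZ hYZ Finset.univ hP
    obtain ⟨f, hf, hκ⟩ := InfFour.exists_fiber_map GC S' (fun A => hS A (Finset.mem_univ A))
    obtain ⟨G2, P2, h2⟩ := InfFour.transfer (κ' := Sigma.fst) hP' f hf hκ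
    exact ⟨G2, InfFour.St.conv (GC := GC.truncate4) h2⟩
  · rintro ⟨Gm, hc, hd⟩
    obtain ⟨P, hP⟩ := InfFour.toSt hXZ hYZ hc hd
    obtain ⟨G2, P2, h2⟩ := InfFour.transfer (W := GC.MicroV) (κ' := Sigma.fst) hP
      (fun v => ⟨v.1, Fin.castLE (min_le_left _ _) v.2⟩) (by
        rintro ⟨A, i⟩ - ⟨B, j⟩ - hab
        have hAB : A = B := congrArg Sigma.fst hab
        subst hAB
        have h2 := eq_of_heq (Sigma.mk.inj hab).2
        have h3 : i = j := Fin.castLE_injective _ h2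
        rw [h3]) (fun v => rfl)
    exact ⟨G2, InfFour.St.conv h2⟩
end
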